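/- arXiv:1507.00309 — 2 statements merged into one kernel-verified Lean document; each statement's English description precedes it below -/
import Mathlib

section
/- Let G be a finite group and let p be a prime. If the average of the degrees of the irreducible complex characters of G whose degrees are not divisible by p is strictly less than 2(p+1)/(p+3), then G has a normal p-complement. -/
open scoped BigOperators

/-- The set of irreducible complex characters of `G`, viewed as functions `G → ℂ`. -/
def Irr (G : Type) [Monoid G] : Set (G → ℂ) :=
  {f | ∃ V : FDRep ℂ G, CategoryTheory.Simple V ∧ f = V.character}

/-- The degree of a character, i.e. its value at the identity (a natural number). -/
noncomputable def charDeg {G : Type} [One G] (f : G → ℂ) : ℕ := ⌊(f 1).re⌋₊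

/-- The average of the degrees of the characters in a set `S` of characters. -/
noncomputable def acd {G : Type} [One G] (S : Set (G → ℂ)) : ℝ :=
  (∑ᶠ f ∈ S, (f 1).re) / (S.ncard : ℝ)

/-- `G` has a normal `p`-complement: a normal subgroup of order coprime to `p`
whose index is a power of `p`. -/
def HasNormalPComplement (p : ℕ) (G : Type) [Group G] : Prop :=
  ∃ N : Subgroup G, N.Normal ∧ Nat.Coprime (Nat.card N) p ∧ ∃ n : ℕ, N.index = p ^ n


namespace PprimeAvg

open Representation

section chars

variable {G : Type} [Group G] [Fintype G]

/-- The usual scalar product of class functions. -/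
noncomputable def ip (f h : G → ℂ) : ℂ := (Nat.card G : ℂ)⁻¹ * ∑ g : G, f g * h g⁻¹

lemma ip_add_left (f₁ f₂ h : G → ℂ) : ip (f₁ + f₂) h = ip f₁ h + ip f₂ h := by
  simp [ip, add_mul, Finset.sum_add_distrib, mul_add]

lemma ip_nsmul_left (n : ℕ) (f h : G → ℂ) : ip (n • f) h = n * ip f h := by
  simp only [ip, Pi.smul_apply, nsmul_eq_mul]
  rw [Finset.mul_sum, Finset.mul_sum, Finset.mul_sum]
  exact Finset.sum_congr rfl fun x _ => by ring

lemma ip_zero_left (h : G → ℂ) : ip 0 h = 0 := by simp [ip]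

lemma ip_sum_left {ι : Type*} (s : Finset ι) (F : ι → G → ℂ) (h : G → ℂ) :
    ip (∑ i ∈ s, F i) h = ∑ i ∈ s, ip (F i) h := by
  classical
  induction s using Finset.induction_on with
  | empty => simp [ip_zero_left]
  | insert a s ha ih => rw [Finset.sum_insert ha, Finset.sum_insert ha, ip_add_left, ih]

lemma card_ne : (Nat.card G : ℂ) ≠ 0 := by
  exact_mod_cast Nat.card_pos.ne'

lemma of_mem_Irr {V : Type} [AddCommGroup V] [Module ℂ V] [Module.Finite ℂ V]
    (ρ : Representation ℂ G V)
    (h : ∑ g : G, ρ.character g * ρ.character g⁻¹ = Nat.card G) : ρ.character ∈ Irr G :=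
  ⟨FDRep.of ρ, (FDRep.simple_iff_char_is_norm_one (FDRep.of ρ)).2 h, rfl⟩

lemma Irr_norm {f : G → ℂ} (hf : f ∈ Irr G) : ∑ g : G, f g * f g⁻¹ = Nat.card G := by
  obtain ⟨V, hV, rfl⟩ := hf
  exact (FDRep.simple_iff_char_is_norm_one V).1 hV

open scoped Classical in
lemma ip_Irr {f h : G → ℂ} (hf : f ∈ Irr G) (hh : h ∈ Irr G) :
    ip f h = if f = h then 1 else 0 := by
  split_ifs with hfh
  · subst hfh
    rw [ip, Irr_norm hf, inv_mul_cancel₀ card_ne]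
  · obtain ⟨V, hV, rfl⟩ := hf
    obtain ⟨W, hW, rfl⟩ := hh
    let _ := invertibleOfNonzero (card_ne (G := G))
    have := FDRep.char_orthonormal V W
    rw [ip, this, if_neg]
    rintro ⟨i⟩
    exact hfh (FDRep.char_iso i)

lemma char_mem_closure (n : ℕ) : ∀ (V : Type) [AddCommGroup V] [Module ℂ V] [Module.Finite ℂ V]
    (ρ : Representation ℂ G V), Module.finrank ℂ V = n →
    ρ.character ∈ AddSubmonoid.closure (Irr G) := by
  induction n using Nat.strong_induction_on with
  | _ n ih =>
  intro V _ _ _ ρ hn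
  let _ := invertibleOfNonzero (card_ne (G := G))
  by_cases hirr : ρ.IsIrreducible
  · apply AddSubmonoid.subset_closure
    apply of_mem_Irr
    have := Representation.char_orthonormal ρ ρ
    rw [if_pos ⟨Representation.Equiv.refl ρ⟩] at this
    field_simp at this
    exact this
  · rcases Nat.eq_zero_or_pos n with h0 | hpos
    · have : Subsingleton V := Module.finrank_zero_iff.1 (hn.trans h0)
      have : ρ.character = 0 := by
        ext g
        have : ρ g = 0 := LinearMap.ext fun x => Subsingleton.elim _ _
        simp [Representation.character, this]
      rw [this]
      exact zero_mem _
    · have hnt : Nontrivial V := Module.nontrivial_of_finrank_pos (R := ℂ) (by omega)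
      have hnt2 : Nontrivial (Subrepresentation ρ) := by
        refine ⟨⊥, ⊤, fun h => ?_⟩
        have : (⊥ : Subrepresentation ρ).toSubmodule = (⊤ : Subrepresentation ρ).toSubmodule := by
          rw [h]
        exact bot_ne_top (α := Submodule ℂ V) this
      have : ∃ U : Subrepresentation ρ, U ≠ ⊥ ∧ U ≠ ⊤ := by
        by_contra! hcon
        exact hirr ⟨fun U => or_iff_not_imp_left.2 (hcon U)⟩
      obtain ⟨U, hU1, hU2⟩ := this
      have hss : ρ.IsSemisimpleRepresentation := inferInstance
      obtain ⟨W, hW⟩ := hss.exists_isCompl U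
      have hc : IsCompl U.toSubmodule W.toSubmodule := by
        constructor
        · rw [disjoint_iff, ← Subrepresentation.toSubmodule_inf, hW.inf_eq_bot]; rfl
        · rw [codisjoint_iff, ← Subrepresentation.toSubmodule_sup, hW.sup_eq_top]; rfl
      have hsum := Submodule.finrank_add_eq_of_isCompl hc
      have hU0 : Module.finrank ℂ U.toSubmodule ≠ 0 := by
        intro h0
        apply hU1
        apply Subrepresentation.toSubmodule_injective
        exact Submodule.finrank_eq_zero.1 h0
      have hW0 : Module.finrank ℂ W.toSubmodule ≠ 0 := by
        intro h0
        apply hU2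
        apply Subrepresentation.toSubmodule_injective
        have : W.toSubmodule = ⊥ := Submodule.finrank_eq_zero.1 h0
        have h2 := hc.sup_eq_top
        rw [this, sup_bot_eq] at h2
        exact h2
      have key : ρ.character = U.toRepresentation.character + W.toRepresentation.character := by
        ext g
        let N : Bool → Submodule ℂ V := fun b => cond b U.toSubmodule W.toSubmodule
        have hN : DirectSum.IsInternal N :=
          (DirectSum.isInternal_submodule_iff_isCompl N (i := true) (j := false) (by simp)
            (by ext b; cases b <;> simp)).2 hc
        have hf : ∀ i, Set.MapsTo (ρ g) (N i) (N i) := by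
          intro i
          cases i
          · exact fun v hv => W.apply_mem_toSubmodule g hv
          · exact fun v hv => U.apply_mem_toSubmodule g hv
        have := LinearMap.trace_eq_sum_trace_restrict hN hf
        rw [Fintype.sum_bool] at this
        exact this
      rw [key]
      exact add_mem (ih _ (by omega) _ _ rfl) (ih _ (by omega) _ _ rfl)

lemma closure_decomp {f : G → ℂ} (hf : f ∈ AddSubmonoid.closure (Irr G)) :
    ∃ n : (G → ℂ) →₀ ℕ, (∀ χ ∈ n.support, χ ∈ Irr G) ∧ f = ∑ χ ∈ n.support, n χ • χ ∧
      ∀ χ ∈ Irr G, ip f χ = n χ := by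
  classical
  have main : ∃ n : (G → ℂ) →₀ ℕ, (∀ χ ∈ n.support, χ ∈ Irr G) ∧ f = n.sum fun χ k => k • χ := by
    induction hf using AddSubmonoid.closure_induction with
    | mem x hx =>
      refine ⟨Finsupp.single x 1, fun χ hχ => ?_, by simp⟩
      rw [Finsupp.mem_support_iff, Finsupp.single_apply] at hχ
      split_ifs at hχ with h
      · exact h ▸ hx
      · exact absurd rfl hχ
    | zero => exact ⟨0, by simp, by simp⟩
    | add x y _ _ hx hy =>
      obtain ⟨n, hn, rfl⟩ := hx
      obtain ⟨m, hm, rfl⟩ := hy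
      refine ⟨n + m, fun χ hχ => ?_, ?_⟩
      · rcases Finset.mem_union.1 (Finsupp.support_add hχ) with h | h
        · exact hn _ h
        · exact hm _ h
      · rw [Finsupp.sum_add_index'] <;> simp [add_mul, add_smul]
  obtain ⟨n, hn, hfn⟩ := main
  refine ⟨n, hn, hfn, fun χ hχ => ?_⟩
  rw [hfn, Finsupp.sum, ip_sum_left]
  have : ∀ ψ ∈ n.support, ip (n ψ • ψ) χ = if ψ = χ then (n χ : ℂ) else 0 := by
    intro ψ hψ
    rw [ip_nsmul_left, ip_Irr (hn ψ hψ) hχ]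
    split_ifs with h
    · simp [h]
    · simp
  rw [Finset.sum_congr rfl this, Finset.sum_ite_eq']
  split_ifs with h
  · rfl
  · rw [Finsupp.notMem_support_iff.1 h, Nat.cast_zero]

lemma Irr_deg {f : G → ℂ} (hf : f ∈ Irr G) : ∃ d : ℕ, 0 < d ∧ f 1 = d := by
  obtain ⟨V, hV, rfl⟩ := hf
  refine ⟨Module.finrank ℂ V, Nat.pos_of_ne_zero fun h0 => ?_, FDRep.char_one V⟩
  have := Irr_norm (G := G) ⟨V, hV, rfl⟩
  have h1 : ∀ g, V.character g = 0 := by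
    intro g
    have : Subsingleton V := Module.finrank_zero_iff.1 h0
    have : V.ρ g = 0 := LinearMap.ext fun x => Subsingleton.elim _ _
    simp [FDRep.character, this]
  simp only [h1, mul_zero, Finset.sum_const_zero] at this
  exact card_ne this.symm

/-- The regular representation. -/
noncomputable def regRep (G : Type) [Group G] : Representation ℂ G (G → ℂ) where
  toFun g := LinearMap.funLeft ℂ ℂ (fun x => g⁻¹ * x)
  map_one' := by ext; simp [LinearMap.funLeft]
  map_mul' a b := by
    ext f x
    simp [LinearMap.funLeft, mul_assoc]

open scoped Classical in
lemma regRep_char (g : G) : (regRep G).character g = if g = 1 then (Nat.card G : ℂ) else 0 := by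
  rw [Representation.character, LinearMap.trace_eq_matrix_trace ℂ (Pi.basisFun ℂ G)]
  simp only [Matrix.trace, Matrix.diag, LinearMap.toMatrix_apply]
  simp only [regRep, MonoidHom.coe_mk, OneHom.coe_mk, LinearMap.funLeft_apply,
    Pi.basisFun_apply, Pi.basisFun_repr, Pi.single_apply]
  by_cases h : g = 1
  · simp [h]
  · simp [h]

lemma ip_reg {χ : G → ℂ} : ip (regRep G).character χ = χ 1 := by
  classical
  simp only [ip, regRep_char]
  simp only [ite_mul, zero_mul, Finset.sum_ite_eq', Finset.mem_univ, if_true, inv_one]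
  rw [inv_mul_cancel_left₀ card_ne]

open scoped Classical in
lemma Irr_reg : ∃ I : Finset (G → ℂ), (∀ χ, χ ∈ I ↔ χ ∈ Irr G) ∧
    ∀ g : G, ∑ χ ∈ I, χ 1 * χ g = if g = 1 then (Nat.card G : ℂ) else 0 := by
  obtain ⟨n, hn, hsum, hip⟩ := closure_decomp (char_mem_closure _ _ (regRep G) rfl)
  refine ⟨n.support, fun χ => ⟨hn χ, fun hχ => ?_⟩, fun g => ?_⟩
  · rw [Finsupp.mem_support_iff]
    intro h0
    have := hip χ hχ
    obtain ⟨d, hd, hd'⟩ := Irr_deg hχ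
    rw [ip_reg, h0, hd'] at this
    norm_cast at this
    omega
  · have h1 := congrFun hsum g
    rw [regRep_char, Finset.sum_apply] at h1
    rw [h1]
    refine Finset.sum_congr rfl fun χ hχ => ?_
    rw [← ip_reg (χ := χ), hip χ (hn χ hχ)]
    simp

lemma lin_inv (l : G →* ℂ) (g : G) : l g * l g⁻¹ = 1 := by
  rw [← map_mul, mul_inv_cancel, map_one]

/-- Twisting a representation by a linear character. -/
noncomputable def twist {V : Type} [AddCommGroup V] [Module ℂ V] (l : G →* ℂ)
    (ρ : Representation ℂ G V) : Representation ℂ G V where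
  toFun g := l g • ρ g
  map_one' := by simp
  map_mul' a b := by
    rw [map_mul, map_mul, smul_mul_smul_comm]

lemma twist_mem {f : G → ℂ} (hf : f ∈ Irr G) (l : G →* ℂ) : (fun g => l g * f g) ∈ Irr G := by
  have hn := Irr_norm hf
  obtain ⟨V, hV, rfl⟩ := hf
  have : (fun g => l g * V.character g) = (twist l V.ρ).character := by
    ext g
    simp [Representation.character, FDRep.character, twist]
  rw [this]
  apply of_mem_Irr
  rw [← this, ← hn]
  refine Finset.sum_congr rfl fun g _ => ?_
  have := lin_inv l g
  linear_combination (V.character g * V.character g⁻¹) * this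

lemma one_mem_Irr : (fun _ : G => (1 : ℂ)) ∈ Irr G := by
  have : (fun _ : G => (1 : ℂ)) = (Representation.trivial ℂ G ℂ).character := by
    ext g
    simp [Representation.character, Representation.trivial]
  rw [this]
  apply of_mem_Irr
  rw [← this]
  simp

lemma lin_mem_Irr (l : G →* ℂ) : (fun g => l g) ∈ Irr G := by
  simpa using twist_mem one_mem_Irr l

lemma lin_of_deg_one {f : G → ℂ} (hf : f ∈ Irr G) (h1 : f 1 = 1) : ∃ l : G →* ℂ, ∀ g, f g = l g := by
  obtain ⟨V, hV, rfl⟩ := hf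
  rw [FDRep.char_one] at h1
  have hfr : Module.finrank ℂ V = 1 := by exact_mod_cast h1
  have key : ∀ g, V.ρ g = V.character g • LinearMap.id := by
    intro g
    obtain ⟨c, hc, -⟩ := LinearMap.existsUnique_eq_smul_id_of_finrank_eq_one hfr (V.ρ g)
    have : V.character g = c := by
      rw [FDRep.character, hc]
      simp [hfr]
    rw [this, hc]
  refine ⟨⟨⟨V.character, ?_⟩, ?_⟩, fun g => rfl⟩
  · rw [FDRep.char_one, hfr]; simp
  · intro a b
    change V.character (a * b) = V.character a * V.character b
    conv_lhs => rw [FDRep.character, map_mul, key a, key b]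
    have : (LinearMap.id : V →ₗ[ℂ] V) * LinearMap.id = LinearMap.id := rfl
    simp [this, hfr, mul_comm]

/-- Restriction of a character decomposes. -/
lemma res_mem_closure {f : G → ℂ} (hf : f ∈ Irr G) (D : Subgroup G) :
    (fun d : D => f d) ∈ AddSubmonoid.closure (Irr D) := by
  classical
  obtain ⟨V, hV, rfl⟩ := hf
  exact char_mem_closure _ _ (MonoidHom.comp V.ρ D.subtype : Representation ℂ D V) rfl

end chars

end PprimeAvg

namespace PprimeAvg

section lemmaA

variable {G : Type} [Group G] [Fintype G]

lemma charDeg_spec {χ : G → ℂ} (h : χ ∈ Irr G) : χ 1 = charDeg χ ∧ 0 < charDeg χ := by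
  obtain ⟨d, hd, h1⟩ := Irr_deg h
  have : charDeg χ = d := by simp [charDeg, h1]
  rw [this]
  exact ⟨h1, hd⟩

/-- Multiplicity of the trivial character in the restriction to `D`. -/
noncomputable def mlt (D : Subgroup G) (χ : G → ℂ) : ℕ :=
  ⌊((Nat.card D : ℂ)⁻¹ * ∑ᶠ d : D, χ d).re⌋₊

lemma mlt_eq (D : Subgroup G) [Fintype D] (χ : G → ℂ) :
    mlt D χ = ⌊(ip (fun d : D => χ d) (fun _ => 1)).re⌋₊ := by
  simp only [mlt, ip, mul_one]
  rw [finsum_eq_sum_of_fintype]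

lemma mlt_spec (D : Subgroup G) [Fintype D] {χ : G → ℂ} (h : χ ∈ Irr G) :
    ip (fun d : D => χ d) (fun _ => 1) = mlt D χ := by
  obtain ⟨n, -, -, hip⟩ := closure_decomp (res_mem_closure h D)
  rw [mlt_eq, hip _ one_mem_Irr]
  simp

lemma sum_mlt (D : Subgroup G) {I : Finset (G → ℂ)} (hI : ∀ χ, χ ∈ I ↔ χ ∈ Irr G)
    [DecidableEq G]
    (hreg : ∀ g : G, ∑ χ ∈ I, χ 1 * χ g = if g = 1 then (Nat.card G : ℂ) else 0) :
    ∑ χ ∈ I, charDeg χ * mlt D χ = D.index := by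
  classical
  have hc : (Nat.card D : ℂ) ≠ 0 := card_ne
  have h1 : ((∑ χ ∈ I, charDeg χ * mlt D χ : ℕ) : ℂ) = D.index := by
    push_cast
    have : ∀ χ ∈ I, (charDeg χ : ℂ) * mlt D χ = (Nat.card D : ℂ)⁻¹ * ∑ d : D, χ 1 * χ d := by
      intro χ hχ
      rw [← mlt_spec D ((hI χ).1 hχ), ← (charDeg_spec ((hI χ).1 hχ)).1, ip]
      simp only [mul_one]
      rw [← Finset.mul_sum]
      ring
    rw [Finset.sum_congr rfl this, ← Finset.mul_sum, Finset.sum_comm]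
    simp only [hreg]
    rw [Finset.sum_eq_single (1 : D)]
    · rw [← D.card_mul_index]
      simp only [OneMemClass.coe_one, if_true]
      push_cast
      field_simp
    · intro d _ hd
      rw [if_neg]
      exact_mod_cast hd
    · simp
  exact_mod_cast h1

/-- restriction of a linear character -/
def resLin (D : Subgroup G) (l : G →* ℂ) : D →* ℂ := l.comp D.subtype

lemma lin_ext {D : Subgroup G} (hD : D ⊔ commutator G = ⊤) {l l' : G →* ℂ}
    (h : ∀ d : D, l d = l' d) : l = l' := by
  have h2 : l.toHomUnits = l'.toHomUnits := by
    have hle : D ⊔ commutator G ≤ MonoidHom.eqLocus l.toHomUnits l'.toHomUnits := by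
      apply sup_le
      · intro d hd
        apply Units.ext
        exact h ⟨d, hd⟩
      · have hk : ∀ k : G →* ℂˣ, commutator G ≤ k.ker := fun k =>
          Abelianization.commutator_subset_ker k
        intro x hx
        change l.toHomUnits x = l'.toHomUnits x
        rw [hk l.toHomUnits hx, hk l'.toHomUnits hx]
    ext x
    have : x ∈ D ⊔ commutator G := by rw [hD]; trivial
    exact congrArg Units.val (hle this)
  ext x
  have := DFunLike.congr_fun h2 x
  exact congrArg Units.val this

/-- `linv l * χ` -/
def tw (l χ : G → ℂ) : G → ℂ := fun g => l g⁻¹ * χ g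

lemma sum_mlt_le {D : Subgroup G} (hD : D ⊔ commutator G = ⊤) {χ : G → ℂ} (h : χ ∈ Irr G)
    (A : Finset (G → ℂ)) (hA : ∀ l ∈ A, l ∈ Irr G ∧ l 1 = 1) :
    ∑ l ∈ A, mlt D (tw l χ) ≤ charDeg χ := by
  classical
  obtain ⟨n, hn, hsum, hip⟩ := closure_decomp (res_mem_closure h D)
  have hlin : ∀ l ∈ A, ∃ k : G →* ℂ, ∀ g, l g = k g := fun l hl =>
    lin_of_deg_one (hA l hl).1 (hA l hl).2
  have hmem : ∀ l ∈ A, (fun d : D => l d) ∈ Irr D := by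
    intro l hl
    obtain ⟨k, hk⟩ := hlin l hl
    have : (fun d : D => l d) = fun d => resLin D k d := by
      ext d; exact hk d
    rw [this]
    exact lin_mem_Irr _
  have h1 : ∀ l ∈ A, mlt D (tw l χ) = n (fun d : D => l d) := by
    intro l hl
    rw [mlt_eq]
    have : ip (fun d : D => tw l χ d) (fun _ => 1) = ip (fun d : D => χ d) (fun d : D => l d) := by
      simp only [ip, tw]
      congr 1
      refine Finset.sum_congr rfl fun d _ => ?_
      push_cast
      ring
    rw [this, hip _ (hmem l hl)]
    simp
  have hinj : Set.InjOn (fun (l : G → ℂ) => fun d : D => l d) A := by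
    intro l hl l' hl' he
    obtain ⟨k, hk⟩ := hlin l hl
    obtain ⟨k', hk'⟩ := hlin l' hl'
    have : k = k' := lin_ext hD fun d => by
      rw [← hk, ← hk']
      exact congrFun he d
    ext g
    rw [hk, hk', this]
  rw [Finset.sum_congr rfl h1,
    ← Finset.sum_image (f := fun ψ => n ψ) (s := A) (g := fun (l : G → ℂ) => fun d : D => l d) hinj]
  have h2 : charDeg χ = ∑ ψ ∈ n.support, n ψ * charDeg ψ := by
    have := congrFun hsum 1
    simp only [OneMemClass.coe_one, (charDeg_spec h).1] at this
    rw [Finset.sum_apply] at this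
    have h3 : ∀ ψ ∈ n.support, (n ψ • ψ) 1 = ((n ψ * charDeg ψ : ℕ) : ℂ) := by
      intro ψ hψ
      rw [Pi.smul_apply, (charDeg_spec (hn ψ hψ)).1]
      simp
    rw [Finset.sum_congr rfl h3, ← Nat.cast_sum] at this
    exact_mod_cast this
  rw [h2]
  calc ∑ ψ ∈ A.image (fun (l : G → ℂ) => fun d : D => l d), n ψ
      = ∑ ψ ∈ A.image (fun (l : G → ℂ) => fun d : D => l d) ∩ n.support, n ψ := by
        symm
        apply Finset.sum_subset Finset.inter_subset_left
        intro ψ h1 h2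
        by_contra h3
        exact h2 (Finset.mem_inter.2 ⟨h1, Finsupp.mem_support_iff.2 h3⟩)
    _ ≤ ∑ ψ ∈ n.support, n ψ :=
        Finset.sum_le_sum_of_subset Finset.inter_subset_right
    _ ≤ ∑ ψ ∈ n.support, n ψ * charDeg ψ := by
        refine Finset.sum_le_sum fun ψ hψ => ?_
        exact Nat.le_mul_of_pos_right _ (charDeg_spec (hn ψ hψ)).2

lemma tw_mem {l χ : G → ℂ} (hl : l ∈ Irr G) (hl1 : l 1 = 1) (h : χ ∈ Irr G) :
    tw l χ ∈ Irr G ∧ charDeg (tw l χ) = charDeg χ ∧ tw (fun g => l g⁻¹) (tw l χ) = χ ∧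
      (fun g => l g⁻¹) ∈ Irr G := by
  obtain ⟨k, hk⟩ := lin_of_deg_one hl hl1
  let k' : G →* ℂ := (Units.coeHom ℂ).comp (k.toHomUnits)⁻¹
  have hk' : ∀ g, l g⁻¹ = k' g := by
    intro g
    rw [hk]
    have h1 := lin_inv k g
    have h2 : k' g = (k g)⁻¹ := by
      simp [k']
    rw [h2]
    exact eq_inv_of_mul_eq_one_right h1
  refine ⟨?_, ?_, ?_, ?_⟩
  · have := twist_mem h k'
    convert this using 1
    ext g
    rw [tw, hk']
  · simp [charDeg, tw, hl1]
  · ext g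
    simp only [tw, inv_inv]
    have := lin_inv k g
    rw [hk, hk]
    linear_combination (χ g) * this
  · have := lin_mem_Irr k'
    convert this using 1
    ext g
    rw [hk']

lemma mlt_lin {D : Subgroup G} (hD : D ⊔ commutator G = ⊤) {l : G → ℂ} (hl : l ∈ Irr G)
    (hl1 : l 1 = 1) [Decidable (l = fun _ => 1)] :
    mlt D l = if l = fun _ => 1 then 1 else 0 := by
  classical
  obtain ⟨k, hk⟩ := lin_of_deg_one hl hl1
  have hmem : (fun d : D => l d) ∈ Irr D := by
    have : (fun d : D => l d) = fun d => resLin D k d := by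
      ext d; exact hk d
    rw [this]
    exact lin_mem_Irr _
  rw [mlt_eq, ip_Irr hmem one_mem_Irr]
  by_cases h : l = fun _ => 1
  · rw [if_pos h, if_pos]
    · simp
    · ext d; rw [h]
  · rw [if_neg h, if_neg]
    · simp
    · intro he
      apply h
      have : k = 1 := lin_ext hD fun d => by
        rw [← hk]
        exact congrFun he d
      ext g
      rw [hk, this]
      rfl

lemma weight_ineq (p k : ℝ) (hp : 2 ≤ p) (hk : 2 ≤ k) :
    min k (p - 1) ≤ (k * (p + 3) - 2 * (p + 1)) / k := by
  rw [le_div_iff₀ (by linarith)]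
  rcases le_total k (p + 1) with h | h
  · have : min k (p - 1) * k ≤ k * k := by
      apply mul_le_mul_of_nonneg_right (min_le_left _ _) (by linarith)
    nlinarith
  · have : min k (p - 1) * k ≤ (p - 1) * k := by
      apply mul_le_mul_of_nonneg_right (min_le_right _ _) (by linarith)
    nlinarith

theorem lemmaA {D : Subgroup G} (hD : D ⊔ commutator G = ⊤) {p : ℕ} (hp : p.Prime)
    (hdvd : p ∣ D.index) :
    2 * ((p : ℝ) + 1) / ((p : ℝ) + 3) ≤ acd {f ∈ Irr G | ¬ p ∣ charDeg f} := by
  classical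
  obtain ⟨I, hI, hreg⟩ := Irr_reg (G := G)
  set A := I.filter (fun χ => charDeg χ = 1) with hAdef
  set X := I.filter (fun χ => charDeg χ ≠ 1 ∧ ¬ p ∣ charDeg χ) with hXdef
  have hA1 : ∀ l ∈ A, l ∈ Irr G ∧ l 1 = 1 := by
    intro l hl
    rw [hAdef, Finset.mem_filter] at hl
    have h1 := (hI l).1 hl.1
    refine ⟨h1, ?_⟩
    rw [(charDeg_spec h1).1, hl.2, Nat.cast_one]
  have hX1 : ∀ χ ∈ X, χ ∈ Irr G ∧ 2 ≤ charDeg χ := by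
    intro χ hχ
    rw [hXdef, Finset.mem_filter] at hχ
    have h1 := (hI χ).1 hχ.1
    have := (charDeg_spec h1).2
    have := hχ.2.1
    exact ⟨h1, by omega⟩
  have hdisj : Disjoint A X := by
    rw [Finset.disjoint_left]
    intro χ h1 h2
    exact (Finset.mem_filter.1 h2).2.1 (Finset.mem_filter.1 h1).2
  have hset : {f ∈ Irr G | ¬ p ∣ charDeg f} = ((A ∪ X : Finset (G → ℂ)) : Set (G → ℂ)) := by
    ext χ
    simp only [Set.mem_setOf_eq, Finset.coe_union, Set.mem_union, Finset.mem_coe, hAdef, hXdef,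
      Finset.mem_filter, hI]
    constructor
    · rintro ⟨h1, h2⟩
      by_cases h3 : charDeg χ = 1
      · exact Or.inl ⟨h1, h3⟩
      · exact Or.inr ⟨h1, h3, h2⟩
    · rintro (⟨h1, h2⟩ | ⟨h1, -, h2⟩)
      · refine ⟨h1, ?_⟩
        rw [h2]
        exact hp.one_lt.ne' ∘ Nat.dvd_one.1
      · exact ⟨h1, h2⟩
  have hone : (fun _ : G => (1 : ℂ)) ∈ A := by
    rw [hAdef, Finset.mem_filter, hI]
    exact ⟨one_mem_Irr, by simp [charDeg]⟩
  -- the congruence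
  have hcong : p ∣ 1 + ∑ χ ∈ X, charDeg χ * mlt D χ := by
    have h1 := sum_mlt D hI hreg
    have h2 : ∑ χ ∈ A, charDeg χ * mlt D χ = 1 := by
      rw [Finset.sum_eq_single (fun _ : G => (1 : ℂ))]
      · rw [mlt_lin hD one_mem_Irr rfl, if_pos rfl]
        simp [charDeg]
      · intro l hl hne
        rw [mlt_lin hD (hA1 l hl).1 (hA1 l hl).2, if_neg hne, mul_zero]
      · exact fun h => absurd hone h
    have hsub : A ∪ X ⊆ I := by
      apply Finset.union_subset <;> exact Finset.filter_subset _ _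
    rw [← Finset.sum_sdiff hsub, Finset.sum_union hdisj, h2] at h1
    have h3 : p ∣ ∑ χ ∈ I \ (A ∪ X), charDeg χ * mlt D χ := by
      apply Finset.dvd_sum
      intro χ hχ
      apply Dvd.dvd.mul_right
      by_contra hnd
      rw [Finset.mem_sdiff] at hχ
      apply hχ.2
      rw [← Finset.mem_coe, ← hset]
      exact ⟨(hI χ).1 hχ.1, hnd⟩
    rw [← h1] at hdvd
    exact (Nat.dvd_add_right h3).1 hdvd
  have hge : p - 1 ≤ ∑ χ ∈ X, charDeg χ * mlt D χ := by
    have := Nat.le_of_dvd (by omega) hcong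
    omega
  have hp2 : (2 : ℝ) ≤ p := by exact_mod_cast hp.two_le
  have hmin : (p : ℝ) - 1 ≤ ∑ χ ∈ X, min (charDeg χ : ℝ) (p - 1) * mlt D χ := by
    have hnn : ∀ χ ∈ X, 0 ≤ min (charDeg χ : ℝ) (p - 1) * mlt D χ := by
      intro χ _
      apply mul_nonneg _ (Nat.cast_nonneg _)
      apply le_min (Nat.cast_nonneg _)
      linarith
    by_cases hbig : ∃ χ ∈ X, (p : ℝ) - 1 ≤ charDeg χ ∧ mlt D χ ≠ 0
    · obtain ⟨χ, hχ, h1, h2⟩ := hbig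
      refine le_trans ?_ (Finset.single_le_sum hnn hχ)
      rw [min_eq_right h1]
      have : (1 : ℝ) ≤ mlt D χ := by exact_mod_cast Nat.pos_of_ne_zero h2
      nlinarith
    · push Not at hbig
      have : ∀ χ ∈ X, min (charDeg χ : ℝ) (p - 1) * mlt D χ = charDeg χ * mlt D χ := by
        intro χ hχ
        by_cases h0 : mlt D χ = 0
        · simp [h0]
        · rw [min_eq_left]
          by_contra hcon
          exact h0 (hbig χ hχ (le_of_not_ge hcon))
      rw [Finset.sum_congr rfl this]
      have h3 : ((p - 1 : ℕ) : ℝ) ≤ ((∑ χ ∈ X, charDeg χ * mlt D χ : ℕ) : ℝ) := by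
        exact_mod_cast hge
      rw [Nat.cast_sub hp.one_lt.le] at h3
      push_cast at h3
      exact h3
  let w : ℕ → ℝ := fun k => (k * ((p : ℝ) + 3) - 2 * (p + 1)) / k
  have hw : ∀ χ ∈ X, min (charDeg χ : ℝ) (p - 1) ≤ w (charDeg χ) := fun χ hχ =>
    weight_ineq _ _ hp2 (by exact_mod_cast (hX1 χ hχ).2)
  have hw0 : ∀ χ ∈ X, 0 ≤ w (charDeg χ) := fun χ hχ =>
    le_trans (le_min (Nat.cast_nonneg _) (by linarith)) (hw χ hχ)
  have hshift : ∀ l ∈ A, ∑ χ ∈ X, w (charDeg χ) * mlt D (tw l χ)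
      = ∑ χ ∈ X, w (charDeg χ) * mlt D χ := by
    intro l hl
    obtain ⟨hl1, hl2⟩ := hA1 l hl
    have hlinv := (tw_mem hl1 hl2 one_mem_Irr).2.2.2
    have hmaps : ∀ k : G → ℂ, k ∈ Irr G → k 1 = 1 → ∀ χ ∈ X, tw k χ ∈ X := by
      intro k hk hk1 χ hχ
      rw [hXdef, Finset.mem_filter, hI] at hχ ⊢
      have := tw_mem hk hk1 hχ.1
      rw [this.2.1]
      exact ⟨this.1, hχ.2⟩
    refine Finset.sum_nbij' (tw l) (tw fun g => l g⁻¹) (hmaps l hl1 hl2)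
      (hmaps _ hlinv (by simpa using hl2)) ?_ ?_ ?_
    · intro χ hχ
      exact (tw_mem hl1 hl2 (hX1 χ hχ).1).2.2.1
    · intro χ hχ
      have := (tw_mem hlinv (by simpa using hl2) (hX1 χ hχ).1).2.2.1
      simpa using this
    · intro χ hχ
      rw [(tw_mem hl1 hl2 (hX1 χ hχ).1).2.1]
  have hmain : (A.card : ℝ) * (p - 1) ≤ ∑ χ ∈ X, (charDeg χ * ((p : ℝ) + 3) - 2 * (p + 1)) := by
    calc (A.card : ℝ) * (p - 1) ≤ A.card * ∑ χ ∈ X, w (charDeg χ) * mlt D χ := by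
          apply mul_le_mul_of_nonneg_left _ (Nat.cast_nonneg _)
          refine hmin.trans (Finset.sum_le_sum fun χ hχ => ?_)
          exact mul_le_mul_of_nonneg_right (hw χ hχ) (Nat.cast_nonneg _)
      _ = ∑ l ∈ A, ∑ χ ∈ X, w (charDeg χ) * mlt D (tw l χ) := by
          rw [Finset.sum_congr rfl hshift, Finset.sum_const, nsmul_eq_mul]
      _ = ∑ χ ∈ X, w (charDeg χ) * ((∑ l ∈ A, mlt D (tw l χ) : ℕ) : ℝ) := by
          rw [Finset.sum_comm]
          refine Finset.sum_congr rfl fun χ _ => ?_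
          push_cast
          rw [Finset.mul_sum]
      _ ≤ ∑ χ ∈ X, w (charDeg χ) * charDeg χ := by
          refine Finset.sum_le_sum fun χ hχ => ?_
          apply mul_le_mul_of_nonneg_left _ (hw0 χ hχ)
          exact_mod_cast sum_mlt_le hD (hX1 χ hχ).1 A hA1
      _ = _ := by
          refine Finset.sum_congr rfl fun χ hχ => ?_
          have : (charDeg χ : ℝ) ≠ 0 := by
            have := (hX1 χ hχ).2
            exact_mod_cast (by omega : charDeg χ ≠ 0)
          simp only [w]
          field_simp
  rw [hset, acd, finsum_mem_coe_finset, Set.ncard_coe_finset, Finset.sum_union hdisj,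
    Finset.card_union_of_disjoint hdisj]
  have hsA : ∑ f ∈ A, (f 1).re = A.card := by
    rw [Finset.sum_congr rfl (g := fun _ => (1 : ℝ))]
    · simp
    · intro l hl
      rw [(hA1 l hl).2, Complex.one_re]
  have hsX : ∑ f ∈ X, (f 1).re = ∑ f ∈ X, (charDeg f : ℝ) := by
    refine Finset.sum_congr rfl fun χ hχ => ?_
    rw [(charDeg_spec (hX1 χ hχ).1).1, Complex.natCast_re]
  rw [hsA, hsX]
  rw [Finset.sum_sub_distrib, ← Finset.sum_mul, Finset.sum_const, nsmul_eq_mul] at hmain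
  have hApos : (0 : ℝ) < A.card := by exact_mod_cast Finset.card_pos.2 ⟨_, hone⟩
  have hXnn : (0 : ℝ) ≤ X.card := Nat.cast_nonneg _
  push_cast
  rw [div_le_div_iff₀ (by linarith) (by linarith)]
  nlinarith

end lemmaA

end PprimeAvg

namespace PprimeAvg

section ext

lemma factor_inj {X E A : Type*} [Group X] [Group E] [Group A] (ι : A →* E)
    (hι : Function.Injective ι) (f : X →* E) (hf : ∀ x, f x ∈ ι.range) :
    ∃ g : X →* A, ∀ x, ι (g x) = f x := by
  choose g hg using hf
  refine ⟨MonoidHom.mk' g (fun a b => hι ?_), hg⟩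
  rw [hg, map_mul, map_mul, hg, hg]

lemma factor_surj {X Y E : Type*} [Group X] [Group Y] [Group E] (f : X →* Y)
    (hf : Function.Surjective f) (g : X →* E) (hg : ∀ x, f x = 1 → g x = 1) :
    ∃ h : Y →* E, ∀ x, h (f x) = g x :=
  ⟨f.liftOfRightInverseAux _ (Function.rightInverse_surjInv hf) g (fun x hx => hg x hx),
    fun x => MonoidHom.liftOfRightInverseAux_comp_apply _ _ _ _ _ x⟩

lemma ext_step {G E E' A : Type*} [Group G] [Finite G] [Group E] [Group E'] [CommGroup A]
    {p : ℕ} (hp : p.Prime) (hA : Nat.card A = p)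
    (ι : A →* E) (hι : Function.Injective ι) (hc : ∀ a e, ι a * e = e * ι a)
    (q : E →* E') (hq : Function.Surjective q) (hker : q.ker = ι.range)
    (D : Subgroup G) (hD : D ⊔ commutator G = ⊤) (hidx : ¬ p ∣ D.index)
    (hmin : ∀ M < D, M ⊔ commutator G ≠ ⊤)
    (r : D →* E) (t : G →* E') (ht : ∀ d : D, t d = q (r d)) :
    ∃ s : G →* E, ∀ d : D, s d = r d := by
  have hmem : ∀ e, e ∈ ι.range ↔ q e = 1 := fun e => by rw [← hker]; rfl
  have hcr : ∀ z ∈ ι.range, ∀ e, z * e = e * z := by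
    rintro _ ⟨a, rfl⟩ e
    exact hc a e
  -- the pullback
  let K : Subgroup (G × E) :=
    (t.comp (MonoidHom.fst G E)).eqLocus (q.comp (MonoidHom.snd G E))
  have hK : ∀ x : K, t x.1.1 = q x.1.2 := fun x => x.2
  let π : K →* G := (MonoidHom.fst G E).comp K.subtype
  have hπ : Function.Surjective π := fun g => by
    obtain ⟨e, he⟩ := hq (t g)
    exact ⟨⟨(g, e), he.symm⟩, rfl⟩
  let H : Subgroup K := D.comap π
  have hHidx : H.index = D.index := Subgroup.index_comap_of_surjective D hπ
  have hfin : H.FiniteIndex := ⟨by rw [hHidx]; exact Subgroup.index_ne_zero_of_finite⟩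
  let ρ : H → E := fun x => r ⟨π x.1, x.2⟩
  have hρmul : ∀ x y, ρ (x * y) = ρ x * ρ y := fun x y => by
    rw [← map_mul]; rfl
  have hφ0 : ∀ x : H, (ρ x)⁻¹ * x.1.1.2 ∈ ι.range := fun x => by
    rw [hmem, map_mul, map_inv, ← hK, inv_mul_eq_one]
    exact (ht ⟨π x.1, x.2⟩).symm
  obtain ⟨φ, hφ⟩ := factor_inj ι hι
    (MonoidHom.mk' (fun x : H => (ρ x)⁻¹ * x.1.1.2) (fun x y => by
      have h1 := hcr _ (hφ0 x) (ρ y)⁻¹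
      rw [hρmul]
      simp only [Subgroup.coe_mul, Prod.snd_mul, mul_inv_rev]
      calc _ = ((ρ y)⁻¹ * ((ρ x)⁻¹ * x.1.1.2)) * y.1.1.2 := by group
        _ = _ := by rw [← h1]; group)) hφ0
  let V : K →* A := MonoidHom.transfer φ
  let j : A → K := fun a => ⟨(1, ι a), by
    have : q (ι a) = 1 := (hmem _).1 ⟨a, rfl⟩
    change t 1 = q (ι a)
    rw [this, map_one]⟩
  have hV : ∀ a : A, V (j a) = a ^ D.index := fun a => by
    have hcent : ∀ g₀ : K, g₀ * j a = j a * g₀ := fun g₀ => by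
      apply Subtype.ext
      apply Prod.ext
      · simp [j]
      · simp [j, hc]
    have := MonoidHom.transfer_eq_pow φ (j a) (fun k g₀ _ => by
      have : Commute g₀ (j a ^ k) := Commute.pow_right (hcent g₀) k
      rw [mul_assoc, ← this.eq, inv_mul_cancel_left])
    change MonoidHom.transfer φ (j a) = _
    rw [this]
    apply hι
    rw [hφ, map_pow]
    simp only [MonoidHom.mk'_apply]
    have h1 : ρ ⟨j a ^ H.index, MonoidHom.transfer_eq_pow_aux (j a) (fun k g₀ _ => by
      have : Commute g₀ (j a ^ k) := Commute.pow_right (hcent g₀) k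
      rw [mul_assoc, ← this.eq, inv_mul_cancel_left])⟩ = 1 := by
      change r _ = 1
      convert map_one r
      simp [π, j]
    rw [h1]
    simp [j, hHidx]
  have hcop : Nat.Coprime D.index p := ((Nat.Prime.coprime_iff_not_dvd hp).2 hidx).symm
  obtain ⟨u, -, hu⟩ := Nat.exists_mul_mod_eq_one_of_coprime hcop hp.one_lt
  have hapow : ∀ a : A, (a ^ D.index) ^ u = a := fun a => by
    rw [← pow_mul, ← pow_mod_natCard, hA, hu, pow_one]
  obtain ⟨s₀, hs₀⟩ := factor_surj π hπ
    (MonoidHom.mk' (fun x : K => x.1.2 * ι ((V x ^ u)⁻¹)) (fun x y => by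
      simp only [Subgroup.coe_mul, Prod.snd_mul, map_mul, mul_pow, mul_inv]
      calc _ = x.1.2 * (y.1.2 * ι ((V x ^ u)⁻¹)) * ι ((V y ^ u)⁻¹) := by group
        _ = _ := by rw [← hc ((V x ^ u)⁻¹) y.1.2]; simp only [mul_assoc]))
    (fun x hx => by
      obtain ⟨a, ha⟩ := (hmem x.1.2).2 (by
        rw [← hK]
        have : x.1.1 = 1 := hx
        rw [this, map_one])
      have hxa : x = j a := by
        apply Subtype.ext
        exact Prod.ext hx ha.symm
      simp only [MonoidHom.mk'_apply]
      rw [hxa, hV, hapow]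
      simp [j])
  have hs₀q : ∀ g, q (s₀ g) = t g := fun g => by
    obtain ⟨x, rfl⟩ := hπ g
    rw [hs₀]
    simp only [MonoidHom.mk'_apply, map_mul]
    rw [(hmem _).1 ⟨_, rfl⟩, mul_one, ← hK]
    rfl
  have hδ0 : ∀ d : D, r d * (s₀ d)⁻¹ ∈ ι.range := fun d => by
    rw [hmem, map_mul, map_inv, hs₀q, ht, mul_inv_cancel]
  obtain ⟨δ, hδ⟩ := factor_inj ι hι
    (MonoidHom.mk' (fun d : D => r d * (s₀ d)⁻¹) (fun x y => by
      have h1 := hcr _ (hδ0 y) (s₀ x)⁻¹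
      simp only [Subgroup.coe_mul, map_mul, mul_inv_rev]
      calc _ = r x * ((r y * (s₀ y)⁻¹) * (s₀ x)⁻¹) := by group
        _ = _ := by rw [h1]; group)) hδ0
  have hδk : ∀ d : D, (d : G) ∈ commutator G → δ d = 1 := by
    intro d hd
    by_contra hne
    have : Fact p.Prime := ⟨hp⟩
    refine hmin (δ.ker.map D.subtype) (lt_of_le_of_ne ?_ ?_) ?_
    · rintro _ ⟨x, -, rfl⟩
      exact x.2
    · intro heq
      have : (d : G) ∈ δ.ker.map D.subtype := heq.ge d.2
      obtain ⟨x, hx, hxd⟩ := this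
      have : x = d := Subtype.ext hxd
      exact hne (this ▸ hx)
    · rw [eq_top_iff, ← hD]
      refine sup_le (fun x hx => ?_) le_sup_right
      have hz : δ ⟨x, hx⟩ ∈ Subgroup.zpowers (δ d) := mem_zpowers_of_prime_card hA hne
      obtain ⟨k, hk⟩ := hz
      have e : x = (x * ((d : G) ^ k)⁻¹) * (d : G) ^ k := by group
      rw [e]
      refine mul_mem (Subgroup.mem_sup_left ⟨⟨x, hx⟩ * (d ^ k)⁻¹, ?_, by simp⟩)
        (Subgroup.mem_sup_right (zpow_mem hd k))
      change δ _ = 1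
      simp only at hk
      rw [map_mul, map_inv, map_zpow, hk, mul_inv_cancel]
  obtain ⟨δ', hδ'⟩ := factor_surj ((Abelianization.of (G := G)).comp D.subtype) (by
      intro y
      obtain ⟨g, rfl⟩ := QuotientGroup.mk_surjective y
      have hg : g ∈ D ⊔ commutator G := hD ▸ Subgroup.mem_top g
      obtain ⟨d, hd, c, hc', rfl⟩ := Subgroup.mem_sup_of_normal_right.1 hg
      refine ⟨⟨d, hd⟩, ?_⟩
      change (QuotientGroup.mk d : G ⧸ commutator G) = QuotientGroup.mk (d * c)
      rw [QuotientGroup.eq]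
      simpa using hc') δ (fun x hx => hδk x (by
      exact (QuotientGroup.eq_one_iff (N := commutator G) (x : G)).1 hx))
  refine ⟨MonoidHom.mk' (fun g => ι (δ' (Abelianization.of g)) * s₀ g) (fun x y => ?_), fun d => ?_⟩
  · simp only [map_mul]
    calc _ = ι (δ' (Abelianization.of x)) * (ι (δ' (Abelianization.of y)) * s₀ x) * s₀ y := by
          group
      _ = _ := by rw [hc (δ' (Abelianization.of y))]; group
  · simp only [MonoidHom.mk'_apply]
    have := hδ' d
    simp only [MonoidHom.comp_apply, Subgroup.subtype_apply] at this
    rw [this, hδ]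
    simp

theorem ext_pgroup {G : Type} [Group G] [Finite G] {p : ℕ} (hp : p.Prime)
    (D : Subgroup G) (hD : D ⊔ commutator G = ⊤) (hidx : ¬ p ∣ D.index)
    (hmin : ∀ M < D, M ⊔ commutator G ≠ ⊤) (n : ℕ) :
    ∀ (E : Type) [Group E] [Finite E], Nat.card E = n → IsPGroup p E → ∀ r : D →* E,
    ∃ s : G →* E, ∀ d : D, s d = r d := by
  induction n using Nat.strong_induction_on with
  | _ n ih =>
  intro E _ _ hn hE r
  have : Fact p.Prime := ⟨hp⟩
  rcases subsingleton_or_nontrivial E with h | h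
  · exact ⟨1, fun d => Subsingleton.elim _ _⟩
  have hcn := hE.center_nontrivial
  have hcp : IsPGroup p (Subgroup.center E) := hE.to_subgroup _
  have hdvd : p ∣ Nat.card (Subgroup.center E) := by
    obtain ⟨k, hk, hk'⟩ := (IsPGroup.nontrivial_iff_card hcp).1 hcn
    rw [hk']
    exact dvd_pow_self p hk.ne'
  obtain ⟨z, hz⟩ := exists_prime_orderOf_dvd_card' p hdvd
  have hz' : orderOf (z : E) = p := by rw [Subgroup.orderOf_coe]; exact hz
  have hcz : ∀ w ∈ Subgroup.zpowers (z : E), ∀ e, w * e = e * w := by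
    intro w hw e
    have : w ∈ Subgroup.center E := (Subgroup.zpowers_le.2 z.2) hw
    exact (Subgroup.mem_center_iff.1 this e).symm
  let Z := Subgroup.zpowers (z : E)
  have hZn : Z.Normal := ⟨fun w hw e => by rw [← hcz w hw e]; simpa using hw⟩
  letI : CommGroup Z := { (inferInstance : Group Z) with
    mul_comm := fun a b => Subtype.ext (hcz a a.2 b) }
  have hcard : Nat.card Z = p := by rw [Nat.card_zpowers, hz']
  have hlt : Nat.card (E ⧸ Z) < n := by
    have h1 := Z.card_eq_card_quotient_mul_card_subgroup
    rw [hn, hcard] at h1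
    rw [h1]
    exact lt_mul_of_one_lt_right Nat.card_pos hp.one_lt
  obtain ⟨t, ht⟩ := ih _ hlt (E ⧸ Z) rfl (hE.to_quotient Z) ((QuotientGroup.mk' Z).comp r)
  exact ext_step hp hcard Z.subtype Z.subtype_injective (fun a e => hcz a a.2 e)
    (QuotientGroup.mk' Z) (QuotientGroup.mk'_surjective Z) (by simp) D hD hidx hmin r t ht

lemma min_nilpotent {G : Type} [Group G] [Finite G] (D : Subgroup G)
    (hD : D ⊔ commutator G = ⊤) (hmin : ∀ M < D, M ⊔ commutator G ≠ ⊤) :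
    Group.IsNilpotent D := by
  refine ((Group.isNilpotent_of_finite_tfae (G := D)).out 0 2).2 ?_
  intro H hH
  apply Subgroup.Normal.of_commutator_le
  by_contra hle
  have htop : H ⊔ commutator D = ⊤ := hH.2 _ (lt_of_le_of_ne le_sup_left (fun h => hle (by
    rw [h]; exact le_sup_right)))
  refine hmin (H.map D.subtype) (lt_of_le_of_ne ?_ ?_) ?_
  · rintro _ ⟨x, -, rfl⟩
    exact x.2
  · intro heq
    apply hH.1
    rw [eq_top_iff]
    intro d _
    have : (d : G) ∈ H.map D.subtype := heq.ge d.2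
    obtain ⟨x, hx, hxd⟩ := this
    have : x = d := Subtype.ext hxd
    exact this ▸ hx
  · rw [eq_top_iff, ← hD]
    refine sup_le ?_ le_sup_right
    have h1 : D = (H ⊔ commutator D).map D.subtype := by
      rw [htop, ← MonoidHom.range_eq_map, Subgroup.range_subtype]
    have h2 : (commutator D).map D.subtype ≤ commutator G := by
      rw [commutator_def, commutator_def, Subgroup.map_commutator]
      exact Subgroup.commutator_mono le_top le_top
    calc D = (H ⊔ commutator D).map D.subtype := h1
      _ = H.map D.subtype ⊔ (commutator D).map D.subtype := Subgroup.map_sup _ _ _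
      _ ≤ _ := sup_le_sup_left h2 _

/-- A finite nilpotent group maps onto a `p`-group with kernel of order prime to `p`. -/
lemma nilpotent_proj {D : Type} [Group D] [Finite D] (hN : Group.IsNilpotent D) {p : ℕ}
    (hp : p.Prime) : ∃ (E : Type) (_ : Group E) (_ : Finite E) (r : D →* E), IsPGroup p E ∧
      ¬ p ∣ Nat.card r.ker := by
  by_cases hdvd : p ∣ Nat.card D
  · obtain ⟨e⟩ := ((Group.isNilpotent_of_finite_tfae (G := D)).out 0 4).1 hN
    have : Fact p.Prime := ⟨hp⟩
    let i : (Nat.card D).primeFactors := ⟨p, Nat.mem_primeFactors.2 ⟨hp, hdvd, Nat.card_pos.ne'⟩⟩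
    let P : Sylow p D := default
    let r : D →* P := (Pi.evalMonoidHom (fun P : Sylow p D => (P : Subgroup D)) P).comp
      ((Pi.evalMonoidHom (fun p : (Nat.card D).primeFactors => ∀ P : Sylow p D, (P : Subgroup D)) i).comp
      e.symm.toMonoidHom)
    have hr : Function.Surjective r := by
      intro x
      classical
      let y1 : ∀ P : Sylow p D, (P : Subgroup D) := Function.update (fun _ => 1) P x
      let y : ∀ p : (Nat.card D).primeFactors, ∀ P : Sylow p D, (P : Subgroup D) :=
        Function.update (fun _ _ => 1) i y1
      refine ⟨e y, ?_⟩
      change (e.symm (e y)) i P = x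
      rw [e.symm_apply_apply]
      simp [y, y1]
    refine ⟨P, inferInstance, inferInstance, r, P.2, fun h => ?_⟩
    have h1 : r.ker.index = Nat.card P := by
      rw [Subgroup.index_ker, MonoidHom.range_eq_top.2 hr, Subgroup.card_top]
    have h2 := r.ker.card_mul_index
    rw [h1] at h2
    have h3 := (P : Subgroup D).card_mul_index
    have h4 : Nat.card r.ker = (P : Subgroup D).index := by
      have hpos : 0 < Nat.card P := Nat.card_pos
      apply Nat.eq_of_mul_eq_mul_right hpos
      rw [h2, ← h3, mul_comm]
    rw [h4] at h
    exact P.not_dvd_index h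
  · refine ⟨Unit, inferInstance, inferInstance, 1, fun x => ⟨0, rfl⟩, fun h => hdvd ?_⟩
    exact h.trans (Subgroup.card_subgroup_dvd_card _)

theorem complement_of_index {G : Type} [Group G] [Finite G] {p : ℕ} (hp : p.Prime)
    (h : ∀ D : Subgroup G, D ⊔ commutator G = ⊤ → ¬ p ∣ D.index) :
    HasNormalPComplement p G := by
  have : Fact p.Prime := ⟨hp⟩
  obtain ⟨D, hDm⟩ := Set.Finite.exists_minimal
    (Set.toFinite {D : Subgroup G | D ⊔ commutator G = ⊤}) ⟨⊤, by simp⟩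
  have hD : D ⊔ commutator G = ⊤ := hDm.1
  have hmin : ∀ M < D, M ⊔ commutator G ≠ ⊤ := fun M hM hM' => hM.not_ge (hDm.2 hM' hM.le)
  obtain ⟨E, _, _, r, hE, hr⟩ := nilpotent_proj (min_nilpotent D hD hmin) hp
  obtain ⟨s, hs⟩ := ext_pgroup hp D hD (h D hD) hmin _ E rfl hE r
  refine ⟨s.ker, inferInstance, ?_, ?_⟩
  · refine ((Nat.Prime.coprime_iff_not_dvd hp).2 fun hdvd => ?_).symm
    have h1 := s.ker.card_mul_index
    have h2 := r.ker.card_mul_index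
    have h3 := D.card_mul_index
    rw [Subgroup.index_ker] at h1 h2
    have hle : Nat.card r.range ∣ Nat.card s.range := by
      apply Subgroup.card_dvd_of_le
      rintro _ ⟨d, rfl⟩
      exact ⟨d, hs d⟩
    obtain ⟨k, hk⟩ := hle
    have hpos : 0 < Nat.card r.range := Nat.card_pos
    have h4 : Nat.card s.ker * k = Nat.card r.ker * D.index := by
      apply Nat.eq_of_mul_eq_mul_right hpos
      rw [hk] at h1
      rw [← h2] at h3
      linarith
    have h5 : p ∣ Nat.card r.ker * D.index := h4 ▸ hdvd.mul_right k
    rcases hp.dvd_mul.1 h5 with h6 | h6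
    · exact hr h6
    · exact h D hD h6
  · rw [Subgroup.index_ker]
    exact IsPGroup.iff_card.1 (hE.to_subgroup s.range)

end ext

end PprimeAvg

theorem avg_pprime_char_degrees_lt_implies_pNilpotent
    (G : Type) [Group G] [Fintype G] (p : ℕ) (hp : p.Prime)
    (h : acd {f ∈ Irr G | ¬ p ∣ charDeg f} < 2 * ((p : ℝ) + 1) / ((p : ℝ) + 3)) :
    HasNormalPComplement p G := by
  refine PprimeAvg.complement_of_index hp fun D hD hdvd => ?_
  exact not_lt.2 (PprimeAvg.lemmaA hD hp hdvd) h
end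

section
/- Let G be a finite group of odd order. If the average of the degrees of the irreducible complex characters of G whose degrees are not divisible by 7 is strictly less than 9/5, then G has a normal 7-complement. -/
open scoped BigOperators

section TatePart
open Subgroup
open scoped commutatorElement IsMulCommutative

theorem tate_step {p : ℕ} [hp : Fact p.Prime] {G : Type} [Group G] [Finite G] (P : Sylow p G)
    (K : Subgroup G) [K.Normal] (hK : ∃ n, K.index = p ^ n)
    (hKP : K.subgroupOf P ≤ commutator P) (hne : K.subgroupOf P ≠ ⊥) :
    ∃ L : Subgroup G, L.Normal ∧ L < K ∧ ∃ n, L.index = p ^ n := by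
  classical
  set P0 : Subgroup P := K.subgroupOf P with hP0
  have hnil : Group.IsNilpotent P := P.2.isNilpotent
  set R : Subgroup P := ⁅P0, (⊤ : Subgroup P)⁆ with hR
  have hRle : R ≤ P0 := Subgroup.commutator_le_left _ _
  have hRne : ¬ P0 ≤ R := by
    intro hle
    apply hne
    obtain ⟨n, hn⟩ := Subgroup.nilpotent_iff_lowerCentralSeries.mp hnil
    rw [eq_bot_iff, ← hn]
    clear hn
    induction n with
    | zero => simp
    | succ n ih =>
      refine hle.trans ?_
      rw [hR]
      exact Subgroup.commutator_mono ih le_rfl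
  have hRK : ∀ x ∈ R, ((QuotientGroup.mk' K).comp (P : Subgroup G).subtype) x = 1 := by
    intro x hx
    have := hRle hx
    rw [hP0, mem_subgroupOf] at this
    simpa using this
  let q : P ⧸ R →* G ⧸ K := QuotientGroup.lift R ((QuotientGroup.mk' K).comp (P : Subgroup G).subtype) hRK
  have hq : ∀ x : P, q (QuotientGroup.mk' R x) = QuotientGroup.mk' K (x : G) := fun x => rfl
  -- the central part
  have hcent : ∀ x ∈ P0, QuotientGroup.mk' R x ∈ center (P ⧸ R) := by
    intro x hx
    rw [mem_center_iff]
    intro y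
    obtain ⟨y, rfl⟩ := QuotientGroup.mk'_surjective R y
    rw [← map_mul, ← map_mul]
    apply QuotientGroup.eq.mpr
    have : ⁅x⁻¹, y⁻¹⁆ ∈ R := commutator_mem_commutator (P0.inv_mem hx) (mem_top _)
    have h2 : (y * x)⁻¹ * (x * y) = ⁅x⁻¹, y⁻¹⁆ := by
      simp only [commutatorElement_def]; group
    rw [h2]; exact this
  have hqker : ∀ y : P ⧸ R, q y = 1 → y ∈ center (P ⧸ R) := by
    intro y
    obtain ⟨y, rfl⟩ := QuotientGroup.mk'_surjective R y
    intro h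
    apply hcent
    rw [hq] at h
    rw [hP0, mem_subgroupOf]
    simpa using h
  let E : Subgroup (G × (P ⧸ R)) :=
    MonoidHom.eqLocus ((QuotientGroup.mk' K).comp (MonoidHom.fst _ _)) (q.comp (MonoidHom.snd _ _))
  have hE : ∀ e : G × (P ⧸ R), e ∈ E ↔ QuotientGroup.mk' K e.1 = q e.2 := fun e => Iff.rfl
  let π : E →* G := (MonoidHom.fst _ _).comp E.subtype
  -- G = P K
  have hPK : (P : Subgroup G) ⊔ K = ⊤ := by
    obtain ⟨n, hn⟩ := hK
    rw [← index_eq_one]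
    have h1 : ((P : Subgroup G) ⊔ K).index ∣ p ^ n := hn ▸ index_dvd_of_le le_sup_right
    have h2 : ((P : Subgroup G) ⊔ K).index ∣ (P : Subgroup G).index := index_dvd_of_le le_sup_left
    obtain ⟨m, hm, hm'⟩ := (Nat.dvd_prime_pow hp.out).mp h1
    rcases Nat.eq_zero_or_pos m with rfl | hmpos
    · simpa using hm'
    · exfalso
      exact P.not_dvd_index ((dvd_pow_self p hmpos.ne').trans (hm' ▸ h2))
  have hπ : Function.Surjective π := by
    intro g
    have : g ∈ (P : Subgroup G) ⊔ K := hPK ▸ mem_top g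
    rw [← SetLike.mem_coe, Subgroup.mul_normal] at this
    obtain ⟨x, hx, k, hk, rfl⟩ := this
    refine ⟨⟨(x * k, QuotientGroup.mk' R ⟨x, hx⟩), ?_⟩, rfl⟩
    rw [hE, hq]
    simpa using hk
  let H : Subgroup E := (P : Subgroup G).comap π
  have hHidx : H.index = (P : Subgroup G).index := index_comap_of_surjective _ hπ
  have hmemH : ∀ e : H, (e : E).1.1 ∈ (P : Subgroup G) := fun e => e.2
  have hφmem : ∀ e : H, (QuotientGroup.mk' R ⟨(e : E).1.1, hmemH e⟩)⁻¹ * (e : E).1.2 ∈ center (P ⧸ R) := by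
    intro e
    apply hqker
    rw [map_mul, map_inv, hq, ← (hE _).mp (e : E).2]
    simp
  let φ : H →* center (P ⧸ R) := MonoidHom.mk'
    (fun e => ⟨(QuotientGroup.mk' R ⟨(e : E).1.1, hmemH e⟩)⁻¹ * (e : E).1.2, hφmem e⟩) (by
      intro a b
      apply Subtype.ext
      have hb := mem_center_iff.mp (hφmem a)
      have e1 : (QuotientGroup.mk' R ⟨((a * b : H) : E).1.1, hmemH (a * b)⟩) =
        QuotientGroup.mk' R ⟨(a : E).1.1, hmemH a⟩ * QuotientGroup.mk' R ⟨(b : E).1.1, hmemH b⟩ := rfl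
      have e2 : ((a * b : H) : E).1.2 = (a : E).1.2 * (b : E).1.2 := rfl
      show (QuotientGroup.mk' R ⟨((a * b : H) : E).1.1, hmemH (a * b)⟩)⁻¹ * ((a * b : H) : E).1.2 = _ * _
      rw [e1, e2]
      rw [mul_inv_rev, mul_assoc, ← mul_assoc _ (a : E).1.2, ← mul_assoc, hb, mul_assoc])
  let τ : E →* center (P ⧸ R) := MonoidHom.transfer φ
  have hτ : ∀ (a : P ⧸ R) (ha : a ∈ center (P ⧸ R)) (haE : ((1 : G), a) ∈ E),
      ((τ ⟨(1, a), haE⟩ : center (P ⧸ R)) : P ⧸ R) = a ^ (P : Subgroup G).index := by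
    intro a ha haE
    have := MonoidHom.transfer_eq_pow φ (⟨(1, a), haE⟩ : E) (by
      intro k g0 _
      apply Subtype.ext
      have hc := mem_center_iff.mp ((center (P ⧸ R)).pow_mem ha k) g0.1.2
      apply Prod.ext
      · simp
      · simp [mul_assoc, ← hc])
    rw [show τ = MonoidHom.transfer φ from rfl, this]
    show (QuotientGroup.mk' R ⟨_, _⟩)⁻¹ * _ = _
    have h1 : ∀ h, (QuotientGroup.mk' R ⟨((⟨(1, a), haE⟩ : E) ^ H.index).1.1, h⟩) = 1 := by
      intro h
      have : (⟨((⟨(1, a), haE⟩ : E) ^ H.index).1.1, h⟩ : P) = 1 := by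
        apply Subtype.ext; simp
      rw [this, map_one]
    rw [h1, ← hHidx]
    simp
  have hkE : ∀ k ∈ K, ((k : G), (1 : P ⧸ R)) ∈ E := by
    intro k hk
    rw [hE, map_one]
    simpa using hk
  let F : K →* center (P ⧸ R) := MonoidHom.mk' (fun k => τ ⟨((k : G), 1), hkE k k.2⟩) (by
    intro a b
    rw [← map_mul]
    congr 1
    apply Subtype.ext
    apply Prod.ext <;> simp)
  have hpP : IsPGroup p (center (P ⧸ R)) := (P.2.to_quotient R).to_subgroup _
  let D : P →* E := MonoidHom.mk' (fun x => ⟨((x : G), QuotientGroup.mk' R x), by rw [hE, hq]⟩) (by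
    intro a b
    apply Subtype.ext
    apply Prod.ext <;> simp)
  obtain ⟨x, hx, hxR⟩ := Set.not_subset.mp hRne
  have hxK : (x : G) ∈ K := hx
  have hFx : F ⟨x, hxK⟩ ≠ 1 := by
    intro hF
    have hDx : τ (D x) = 1 := by
      have := Abelianization.commutator_subset_ker (τ.comp D) (hKP hx)
      simpa using this
    have hxE : ((1 : G), QuotientGroup.mk' R x) ∈ E := by
      rw [hE, hq, map_one]
      symm
      simpa using hxK
    have hprod : D x = ⟨((x : G), 1), hkE x hxK⟩ * ⟨(1, QuotientGroup.mk' R x), hxE⟩ := by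
      apply Subtype.ext
      apply Prod.ext <;> simp [D]
    rw [hprod, map_mul] at hDx
    have hF' : τ ⟨((x : G), 1), hkE x hxK⟩ = 1 := hF
    rw [hF', one_mul] at hDx
    have h3 := hτ _ (hcent x hx) hxE
    rw [hDx] at h3
    have h4 : IsPGroup p (P ⧸ R) := P.2.to_quotient R
    have h5 := (h4.powEquiv' P.not_dvd_index).injective (a₁ := QuotientGroup.mk' R x) (a₂ := 1) (by
      show (QuotientGroup.mk' R x) ^ (P : Subgroup G).index = (1 : P ⧸ R) ^ (P : Subgroup G).index
      rw [← h3]; simp)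
    apply hxR
    simpa using h5
  refine ⟨F.ker.map K.subtype, ?_, ?_, ?_⟩
  · constructor
    rintro _ ⟨k, hk, rfl⟩ g
    obtain ⟨e, rfl⟩ := hπ g
    have hconj : π e * (k : G) * (π e)⁻¹ ∈ K := Normal.conj_mem inferInstance _ k.2 _
    refine ⟨⟨_, hconj⟩, ?_, rfl⟩
    have hk' : τ ⟨((k : G), 1), hkE k k.2⟩ = 1 := hk
    show τ ⟨(_, 1), _⟩ = 1
    have : (⟨(π e * (k : G) * (π e)⁻¹, 1), hkE _ hconj⟩ : E) = e * ⟨((k : G), 1), hkE k k.2⟩ * e⁻¹ := by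
      apply Subtype.ext
      apply Prod.ext
      · simp [π]
      · simp
    rw [this, map_mul, map_mul, hk']
    simp
  · refine lt_of_le_of_ne (map_subtype_le _) ?_
    intro heq
    apply hFx
    have : (x : G) ∈ F.ker.map K.subtype := by rw [heq]; exact hxK
    obtain ⟨k, hk, hkx⟩ := this
    have : k = ⟨x, hxK⟩ := Subtype.ext hkx
    rw [← this]; exact hk
  · obtain ⟨n, hn⟩ := hK
    obtain ⟨m, hm⟩ := (IsPGroup.iff_card.mp (hpP.to_subgroup F.range))
    refine ⟨m + n, ?_⟩
    have := relIndex_mul_index (map_subtype_le F.ker)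
    rw [← this, hn, pow_add, ← hm, ← index_ker, relIndex, subgroupOf, comap_map_eq_self_of_injective K.subtype_injective]

theorem tate_thm {p : ℕ} [hp : Fact p.Prime] {G : Type} [Group G] [Finite G] (P : Sylow p G)
    (h : ∀ x : P, (x : G) ∈ commutator G → x ∈ commutator P) : HasNormalPComplement p G := by
  classical
  let C : Set (Subgroup G) := {K | K.Normal ∧ ∃ n, K.index = p ^ n}
  obtain ⟨K, hKC⟩ : ∃ K, Minimal (· ∈ C) K :=
    (Set.toFinite C).exists_minimal ⟨⊤, inferInstance, 0, by simp⟩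
  have hKn : K.Normal := hKC.1.1
  refine ⟨K, hKn, ?_, hKC.1.2⟩
  -- K is contained in the kernel of every hom to a p-group
  have hle : K.subgroupOf P ≤ commutator P := by
    intro x hx
    apply h
    -- transfer to the abelianization of P
    let L : Subgroup G := K ⊓ (P : Subgroup G).transferFocal.ker
    have hL : L ∈ C := by
      refine ⟨inferInstance, ?_⟩
      obtain ⟨n, hn⟩ := hKC.1.2
      have hr : IsPGroup p (P ⧸ (P : Subgroup G).focalSubgroupOf) := P.2.to_quotient _
      have h1 : IsPGroup p (G ⧸ L) := by
        have : Function.Injective (QuotientGroup.lift L ((QuotientGroup.mk' K).prod (P : Subgroup G).transferFocal) (by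
            intro y hy
            obtain ⟨h1, h2⟩ := hy
            refine Prod.mk_eq_one.mpr ?_
            exact ⟨by simpa using h1, h2⟩)) := by
          rw [injective_iff_map_eq_one]
          intro a
          obtain ⟨a, rfl⟩ := QuotientGroup.mk'_surjective L a
          intro ha
          have ha' : ((QuotientGroup.mk' K) a, (P : Subgroup G).transferFocal a) = 1 := ha
          rw [Prod.mk_eq_one] at ha'
          have : a ∈ L := ⟨by simpa using ha'.1, ha'.2⟩
          simpa using this
        refine IsPGroup.of_injective ?_ _ this
        have hk : IsPGroup p (G ⧸ K) := IsPGroup.of_card (n := n) (by rw [← hn]; rfl)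
        rintro ⟨u, v⟩
        obtain ⟨i, hi⟩ := hk u
        obtain ⟨j, hj⟩ := hr v
        refine ⟨i + j, ?_⟩
        apply Prod.ext
        · simp [pow_add, pow_mul, hi]
        · simp [pow_add, mul_comm (p ^ i), pow_mul, hj]
      obtain ⟨m, hm⟩ := IsPGroup.iff_card.mp h1
      exact ⟨m, hm⟩
    have hKL : K ≤ L := hKC.2 hL inf_le_left
    have hxL := hKL (show (x : G) ∈ K from hx)
    have : (x : G) ∈ P.focalSubgroup := by
      rw [← Subgroup.ker_transferFocal_inf_eq_focalSubgroup]
      exact ⟨hxL.2, x.2⟩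
    exact focalSubgroup_le_commutator _ this
  by_cases hbot : K.subgroupOf P = ⊥
  · rw [Nat.coprime_comm, hp.out.coprime_iff_not_dvd]
    intro hdvd
    have hdis : Disjoint K P := by rwa [subgroupOf_eq_bot] at hbot
    obtain ⟨n, hn⟩ := hKC.1.2
    obtain ⟨y, hy⟩ := exists_prime_orderOf_dvd_card' p hdvd
    have hyp : IsPGroup p (zpowers (y : G)) := by
      apply IsPGroup.of_card (n := 1)
      rw [Nat.card_zpowers, pow_one, ← hy]; simp
    obtain ⟨Q, hQ⟩ := hyp.exists_le_sylow
    obtain ⟨g, hg⟩ := MulAction.exists_smul_eq G Q P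
    have h1 : g * y * g⁻¹ ∈ K := hKn.conj_mem _ y.2 _
    have h2 : g * y * g⁻¹ ∈ P := by
      rw [← hg]
      exact ⟨y, hQ (mem_zpowers _), rfl⟩
    have h3 : g * y * g⁻¹ = 1 := by
      have := hdis.le_bot (show _ ∈ K ⊓ (P : Subgroup G) from ⟨h1, h2⟩)
      simpa using this
    have h4 : y = 1 := by
      apply Subtype.ext
      simpa using h3
    rw [h4] at hy
    simp at hy
    exact hp.out.one_lt.ne hy
  · exfalso
    obtain ⟨L, hLn, hLK, hLi⟩ := tate_step P K hKC.1.2 hle hbot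
    exact hLK.not_ge (hKC.2 ⟨hLn, hLi⟩ hLK.le)

end TatePart
section RepHelpers

open Representation

/-- Concrete irreducibility predicate. -/
def IrrRep {G : Type} [Group G] {V : Type} [AddCommGroup V] [Module ℂ V]
    (ρ : Representation ℂ G V) : Prop :=
  Nontrivial V ∧ ∀ W : Submodule ℂ V, (∀ g, ∀ v ∈ W, ρ g v ∈ W) → W = ⊥ ∨ W = ⊤

theorem IrrRep.isIrreducible {G : Type} [Group G] {V : Type} [AddCommGroup V] [Module ℂ V]
    {ρ : Representation ℂ G V} (h : IrrRep ρ) : ρ.IsIrreducible := by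
  have := h.1
  have : Nontrivial (Subrepresentation ρ) := by
    refine ⟨⊥, ⊤, fun h0 => ?_⟩
    have : (⊥ : Submodule ℂ V) = ⊤ := congrArg Subrepresentation.toSubmodule h0
    exact bot_ne_top this
  refine ⟨fun W => ?_⟩
  rcases h.2 W.toSubmodule (fun g v hv => W.apply_mem_toSubmodule g hv) with h1 | h1
  · left; exact Subrepresentation.toSubmodule_injective h1
  · right; exact Subrepresentation.toSubmodule_injective h1

theorem exists_inv_compl {G : Type} [Group G] [Finite G] {V : Type} [AddCommGroup V] [Module ℂ V]
    (ρ : Representation ℂ G V) (W : Submodule ℂ V) (hW : ∀ g, ∀ v ∈ W, ρ g v ∈ W) :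
    ∃ C : Submodule ℂ V, (∀ g, ∀ v ∈ C, ρ g v ∈ C) ∧ W ⊓ C = ⊥ ∧ W ⊔ C = ⊤ := by
  have : NeZero (Nat.card G : ℂ) := ⟨by exact_mod_cast Nat.card_pos.ne'⟩
  have hs : IsSemisimpleRepresentation ρ := inferInstance
  obtain ⟨C, hC⟩ := hs.exists_isCompl (⟨W, fun g v hv => hW g v hv⟩ : Subrepresentation ρ)
  refine ⟨C.toSubmodule, fun g v hv => C.apply_mem_toSubmodule g hv, ?_, ?_⟩
  · exact congrArg Subrepresentation.toSubmodule hC.inf_eq_bot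
  · exact congrArg Subrepresentation.toSubmodule hC.sup_eq_top

theorem exists_irr_sub {G : Type} [Group G] [Finite G] {V : Type} [AddCommGroup V] [Module ℂ V]
    [FiniteDimensional ℂ V] (ρ : Representation ℂ G V) (p : ℕ) (M : Submodule ℂ V)
    (hM : ∀ g, ∀ v ∈ M, ρ g v ∈ M) (hp : ¬ p ∣ Module.finrank ℂ M) :
    ∃ W : Submodule ℂ V, W ≤ M ∧ ¬ p ∣ Module.finrank ℂ W ∧ (∀ g, ∀ v ∈ W, ρ g v ∈ W) ∧
      ∀ U : Submodule ℂ V, U ≤ W → (∀ g, ∀ v ∈ U, ρ g v ∈ U) → U = ⊥ ∨ U = W := by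
  classical
  have hex : ∃ n, ∃ W : Submodule ℂ V, W ≤ M ∧ ¬ p ∣ Module.finrank ℂ W ∧
      (∀ g, ∀ v ∈ W, ρ g v ∈ W) ∧ Module.finrank ℂ W = n := ⟨_, M, le_rfl, hp, hM, rfl⟩
  obtain ⟨W, hWM, hWp, hWi, hWn⟩ := Nat.find_spec hex
  refine ⟨W, hWM, hWp, hWi, fun U hU hUi => ?_⟩
  have hmin : ∀ U : Submodule ℂ V, U ≤ W → (∀ g, ∀ v ∈ U, ρ g v ∈ U) →
      ¬ p ∣ Module.finrank ℂ U → U = W := by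
    intro U hU hUi hUp
    have := Nat.find_min' hex ⟨U, hU.trans hWM, hUp, hUi, rfl⟩
    exact Submodule.eq_of_le_of_finrank_le hU (hWn ▸ this)
  obtain ⟨C, hCi, hCb, hCt⟩ := exists_inv_compl ρ U hUi
  have h1 : U ⊔ (C ⊓ W) = W := by
    rw [← sup_inf_assoc_of_le C hU, hCt, top_inf_eq]
  have h2 : U ⊓ (C ⊓ W) = ⊥ := by rw [← inf_assoc, hCb, bot_inf_eq]
  have h3 := Submodule.finrank_sup_add_finrank_inf_eq U (C ⊓ W)
  rw [h1, h2, finrank_bot] at h3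
  by_cases hUp : p ∣ Module.finrank ℂ U
  · left
    have h4 : C ⊓ W = W := by
      apply hmin _ inf_le_right
      · intro g v hv
        exact ⟨hCi g v hv.1, hWi g v hv.2⟩
      · intro h5
        apply hWp
        have := dvd_add hUp h5
        rw [← h3] at this
        simpa using this
    rw [h4] at h2
    rwa [inf_eq_left.mpr hU] at h2
  · right; exact hmin U hU hUi hUp

/-- the left translation representation on functions -/
noncomputable def ltr (G : Type) [Group G] : Representation ℂ G (G → ℂ) where
  toFun g :=
    { toFun := fun f x => f (g⁻¹ * x)
      map_add' := fun _ _ => rfl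
      map_smul' := fun _ _ => rfl }
  map_one' := by ext; simp
  map_mul' g h := by
    apply LinearMap.ext; intro f; funext x
    simp [mul_assoc]

@[simp] theorem ltr_apply {G : Type} [Group G] (g : G) (f : G → ℂ) (x : G) :
    ltr G g f x = f (g⁻¹ * x) := rfl

/-- the induced submodule -/
def indSub {G : Type} [Group G] (T : Subgroup G) (ψ : T →* ℂˣ) : Submodule ℂ (G → ℂ) where
  carrier := {f | ∀ (g : G) (t : T), f (g * t) = (((ψ t)⁻¹ : ℂˣ) : ℂ) * f g}
  zero_mem' := by intro g t; simp
  add_mem' := by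
    intro a b ha hb g t
    simp only [Pi.add_apply, ha g t, hb g t]; ring
  smul_mem' := by
    intro c a ha g t
    simp only [Pi.smul_apply, ha g t, smul_eq_mul]; ring

theorem finrank_indSub {G : Type} [Group G] [Finite G] (T : Subgroup G) (ψ : T →* ℂˣ) :
    Module.finrank ℂ (indSub T ψ) = T.index := by
  classical
  have : Fintype (G ⧸ T) := Fintype.ofFinite _
  let L : indSub T ψ →ₗ[ℂ] (G ⧸ T → ℂ) :=
    { toFun := fun f q => f.1 q.out
      map_add' := fun _ _ => rfl
      map_smul' := fun _ _ => rfl }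
  have hq : ∀ g : G, ((g : G ⧸ T).out)⁻¹ * g ∈ T := by
    intro g
    rw [← QuotientGroup.eq]
    exact Quotient.out_eq' _
  have hinj : Function.Injective L := by
    rw [injective_iff_map_eq_zero]
    intro f hf
    ext g
    have h1 := f.2 (g : G ⧸ T).out ⟨_, hq g⟩
    have h2 : f.1 (g : G ⧸ T).out = 0 := congrFun hf (g : G ⧸ T)
    simp only [mul_inv_cancel_left] at h1
    rw [h1, h2]; simp
  have hsurj : Function.Surjective L := by
    intro F
    refine ⟨⟨fun g => (((ψ ⟨_, hq g⟩)⁻¹ : ℂˣ) : ℂ) * F g, ?_⟩, ?_⟩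
    · intro g t
      have e : ((g * t : G) : G ⧸ T) = (g : G ⧸ T) := by
        rw [QuotientGroup.eq]; simp
      have e2 : (⟨_, hq (g * t)⟩ : T) = ⟨_, hq g⟩ * t := by
        ext; simp [e, mul_assoc]
      simp only
      rw [e2, map_mul, mul_inv_rev, e]
      push_cast
      ring
    · funext q
      have e2 : (⟨_, hq q.out⟩ : T) = 1 := by
        ext; simp
      simp only [L, LinearMap.coe_mk, AddHom.coe_mk]
      rw [e2]
      simp
  rw [(LinearEquiv.ofBijective L ⟨hinj, hsurj⟩).finrank_eq, Module.finrank_fintype_fun_eq_card,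
    Subgroup.index, Nat.card_eq_fintype_card]

theorem exists_constituent {G : Type} [Group G] [Finite G] (p : ℕ) (T : Subgroup G) (ψ : T →* ℂˣ)
    (hp : ¬ p ∣ T.index) :
    ∃ (V : Type) (_ : AddCommGroup V) (_ : Module ℂ V) (_ : FiniteDimensional ℂ V)
      (ρ : Representation ℂ G V) (l : V →ₗ[ℂ] ℂ), IrrRep ρ ∧ ¬ p ∣ Module.finrank ℂ V ∧
      l ≠ 0 ∧ ∀ (t : T) v, l (ρ t v) = (ψ t : ℂ) * l v := by
  have : Fintype G := Fintype.ofFinite G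
  have hMi : ∀ g, ∀ v ∈ indSub T ψ, ltr G g v ∈ indSub T ψ := by
    intro g v hv x t
    simp only [ltr_apply]
    rw [← mul_assoc]; exact hv _ t
  obtain ⟨W, hWM, hWp, hWi, hW⟩ := exists_irr_sub (ltr G) p (indSub T ψ) hMi
    (by rwa [finrank_indSub])
  have hne : W ≠ ⊥ := by
    rintro rfl
    simp at hWp
  let σ : Subrepresentation (ltr G) := ⟨W, fun g v hv => hWi g v hv⟩
  let l : W →ₗ[ℂ] ℂ := (LinearMap.proj (1 : G)).comp W.subtype
  refine ⟨W, inferInstance, inferInstance, inferInstance, σ.toRepresentation, l, ⟨?_, ?_⟩,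
    hWp, ?_, ?_⟩
  · exact Submodule.nontrivial_iff_ne_bot.mpr hne
  · intro U hU
    have h1 := hW (U.map W.subtype) (Submodule.map_subtype_le W U) (by
      rintro g _ ⟨u, hu, rfl⟩
      exact ⟨_, hU g u hu, rfl⟩)
    rcases h1 with h1 | h1
    · left
      apply Submodule.map_injective_of_injective W.injective_subtype
      rw [h1]; simp
    · right
      apply Submodule.map_injective_of_injective W.injective_subtype
      rw [h1]; simp
  · intro h0
    apply hne
    rw [Submodule.eq_bot_iff]
    intro f hf
    funext g
    have h1 : l ⟨_, hWi g⁻¹ f hf⟩ = 0 := by rw [h0]; rfl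
    simpa [l] using h1
  · intro t v
    have h1 := hWM v.2 (1 : G) t⁻¹
    simp only [one_mul, map_inv, inv_inv] at h1
    change v.1 ((t : G)⁻¹ * 1) = _ * v.1 1
    rw [mul_one]
    simpa using h1

end RepHelpers

section ChoiceOfT

open Subgroup

theorem exists_T_data {p : ℕ} [hp : Fact p.Prime] {G : Type} [Group G] [Finite G]
    (Q : Sylow p (commutator G)) (P : Sylow p G)
    (hPQ : (P : Subgroup G).comap (commutator G).subtype = Q)
    (x0 : P) (hx0 : (x0 : G) ∈ commutator G) (hx0' : x0 ∉ commutator P) :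
    ∃ (X T P0 : Subgroup G) (τ : T →* ℂˣ) (f : G → ℂˣ),
      (∀ t : T, f t = τ t) ∧ T ≤ X ∧ P0 ≤ T ∧ P0 ≤ commutator G ∧
      X ⊔ commutator G = ⊤ ∧ (∀ x ∈ X, ∀ y ∈ P0, x * y * x⁻¹ ∈ P0) ∧ ¬ p ∣ T.index ∧
      (∀ x ∈ X, (∀ y ∈ P0, f (x * y * x⁻¹) = f y) → x ∈ T) ∧ ∃ y ∈ P0, f y ≠ 1 := by
  classical
  obtain ⟨ψ, hψ⟩ : ∃ ψ : P →* ℂˣ, ψ x0 ≠ 1 := by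
    have h1 : Abelianization.of x0 ≠ 1 := by
      intro h
      exact hx0' ((QuotientGroup.eq_one_iff x0).mp h)
    have : NeZero ((Monoid.exponent (Abelianization P) : ℕ) : ℂ) :=
      ⟨by exact_mod_cast Monoid.exponent_ne_zero_of_finite⟩
    obtain ⟨φ, hφ⟩ := CommGroup.exists_apply_ne_one_of_hasEnoughRootsOfUnity
      (Abelianization P) ℂ h1
    exact ⟨φ.comp Abelianization.of, hφ⟩
  set P0 : Subgroup G := (P : Subgroup G) ⊓ commutator G with hP0
  have hP0Q : P0 = (Q : Subgroup (commutator G)).map (commutator G).subtype := by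
    rw [← hPQ, Subgroup.map_comap_eq, Subgroup.range_subtype, inf_comm]
  set X : Subgroup G := normalizer (P0 : Set G) with hX
  have hXtop : X ⊔ commutator G = ⊤ := by
    rw [hX, hP0Q]; exact Sylow.normalizer_sup_eq_top Q
  have hXn : ∀ x ∈ X, ∀ y ∈ P0, x * y * x⁻¹ ∈ P0 := by
    intro x hx y hy
    exact (Subgroup.mem_normalizer_iff.mp hx y).mp hy
  let ψ0 : G → ℂˣ := fun g => if h : g ∈ (P : Subgroup G) then ψ ⟨g, h⟩ else 1
  have hψ0 : ∀ g (h : g ∈ (P : Subgroup G)), ψ0 g = ψ ⟨g, h⟩ := fun g h => dif_pos h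
  let T : Subgroup G :=
    { carrier := {g | g ∈ X ∧ ∀ y ∈ P0, ψ0 (g * y * g⁻¹) = ψ0 y}
      one_mem' := ⟨X.one_mem, fun y _ => by simp⟩
      mul_mem' := by
        rintro a b ⟨ha, ha'⟩ ⟨hb, hb'⟩
        refine ⟨X.mul_mem ha hb, fun y hy => ?_⟩
        rw [← hb' y hy, ← ha' _ (hXn b hb y hy)]
        congr 1
        group
      inv_mem' := by
        rintro a ⟨ha, ha'⟩
        refine ⟨X.inv_mem ha, fun y hy => ?_⟩
        rw [← ha' _ (hXn _ (X.inv_mem ha) y hy)]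
        congr 1
        group }
  have hPX : (P : Subgroup G) ≤ X := by
    intro g hg
    rw [hX, Subgroup.mem_normalizer_iff]
    intro y
    have hn : (commutator G).Normal := inferInstance
    constructor
    · rintro ⟨h1, h2⟩
      exact ⟨(P : Subgroup G).mul_mem ((P : Subgroup G).mul_mem hg h1) ((P : Subgroup G).inv_mem hg), hn.conj_mem _ h2 g⟩
    · rintro ⟨h1, h2⟩
      have e : y = g⁻¹ * (g * y * g⁻¹) * g := by group
      rw [e]
      refine ⟨(P : Subgroup G).mul_mem ((P : Subgroup G).mul_mem ((P : Subgroup G).inv_mem hg) h1) hg, ?_⟩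
      have := hn.conj_mem _ h2 g⁻¹
      rwa [inv_inv] at this
  have hPT : (P : Subgroup G) ≤ T := by
    intro g hg
    refine ⟨hPX hg, fun y hy => ?_⟩
    have h1 : y ∈ (P : Subgroup G) := hy.1
    rw [hψ0 y h1, hψ0 _ (mul_mem (mul_mem hg h1) (inv_mem hg))]
    have e : (⟨g * y * g⁻¹, mul_mem (mul_mem hg h1) (inv_mem hg)⟩ : P)
        = ⟨g, hg⟩ * ⟨y, h1⟩ * ⟨g, hg⟩⁻¹ := rfl
    rw [e, map_mul, map_mul, map_inv, mul_comm (ψ _) (ψ _), mul_inv_cancel_right]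
  have hidx := Subgroup.relIndex_mul_index hPT
  have hnd : ¬ p ∣ (P : Subgroup G).index := P.not_dvd_index
  let ψ' : (P : Subgroup G).subgroupOf T →* ℂˣ :=
    ψ.comp (subgroupOfEquivOfLe hPT).toMonoidHom
  have hψ' : ∀ z, ψ' z = ψ0 ((z : T) : G) := by
    intro z
    rw [hψ0 _ (mem_subgroupOf.mp z.2)]
    rfl
  set c := ((P : Subgroup G).subgroupOf T).index with hc
  have hcp : ¬ p ∣ c := fun h => hnd (hidx ▸ Dvd.dvd.mul_right h _)
  let τ : T →* ℂˣ := ψ'.transfer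
  have hτ : ∀ y (hy : y ∈ P0), τ ⟨y, hPT hy.1⟩ = ψ0 y ^ c := by
    intro y hy
    set yT : T := ⟨y, hPT hy.1⟩ with hyT
    have : Fintype (Quotient (MulAction.orbitRel (zpowers yT)
      (T ⧸ (P : Subgroup G).subgroupOf T))) := Fintype.ofFinite _
    rw [hc, index_eq_sum_minimalPeriod ((P : Subgroup G).subgroupOf T) yT,
      ← Finset.prod_pow_eq_pow_sum]
    change ψ'.transfer yT = _
    rw [MonoidHom.transfer_eq_prod_quotient_orbitRel_zpowers_quot]
    apply Finset.prod_congr rfl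
    intro q _
    rw [hψ']
    have hpow : ∀ k : ℕ, ψ0 (y ^ k) = ψ0 y ^ k := by
      intro k
      rw [hψ0 _ (pow_mem hy.1 k), hψ0 _ hy.1, ← map_pow]
      rfl
    rw [← hpow]
    have h3 : ∀ (t : T) (k : ℕ), ψ0 ((t⁻¹ * yT ^ k * t : T) : G) = ψ0 (y ^ k) := by
      intro t k
      have h2 := (T.inv_mem t.2).2 (y ^ k) (pow_mem hy k)
      rw [← h2]
      congr 1
      simp [hyT]
    exact h3 _ _
  let f : G → ℂˣ := fun g => if h : g ∈ T then τ ⟨g, h⟩ else 1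
  have hf : ∀ g (h : g ∈ T), f g = τ ⟨g, h⟩ := fun g h => dif_pos h
  obtain ⟨n, hn⟩ := P.isPGroup'.exists_card_eq
  have hone : ∀ z : P, ψ z ^ c = 1 → ψ z = 1 := by
    intro z hz
    have h1 : ψ z ^ (p ^ n) = 1 := by
      rw [← map_pow, ← hn]
      have : z ^ Nat.card P = 1 := pow_card_eq_one'
      rw [this, map_one]
    have h2 : Nat.Coprime c (p ^ n) :=
      Nat.Coprime.pow_right n ((Nat.Prime.coprime_iff_not_dvd hp.out).mpr hcp).symm
    have h3 := Nat.dvd_gcd (orderOf_dvd_of_pow_eq_one hz) (orderOf_dvd_of_pow_eq_one h1)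
    rw [h2] at h3
    exact orderOf_eq_one_iff.mp (Nat.dvd_one.mp h3)
  have hfy : ∀ y, y ∈ P0 → f y = ψ0 y ^ c := by
    intro y hy
    rw [hf y (hPT hy.1), hτ y hy]
  refine ⟨X, T, P0, τ, f, fun t => hf t t.2, fun g hg => hg.1, inf_le_left.trans hPT, inf_le_right, hXtop, hXn,
    fun h => hnd (hidx ▸ Dvd.dvd.mul_left h _), ?_, x0, ⟨x0.2, hx0⟩, ?_⟩
  · intro x hx h
    refine ⟨hx, fun y hy => ?_⟩
    have h1 := h y hy
    have hy' := hXn x hx y hy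
    rw [hfy y hy, hfy _ hy', hψ0 _ hy.1, hψ0 _ hy'.1] at h1
    rw [hψ0 _ hy.1, hψ0 _ hy'.1, ← div_eq_one, ← map_div]
    apply hone
    rw [map_div, div_pow, h1, div_self']
  · rw [hfy _ ⟨x0.2, hx0⟩, hψ0 _ x0.2]
    intro h
    exact hψ (hone _ h)

end ChoiceOfT

section Bound

theorem eig_zero {ι Y E : Type} [AddCommGroup E] [Module ℂ E] (A : Y → E →ₗ[ℂ] E)
    (c : ι → Y → ℂ) (s : Finset ι) :
    ∀ v : ι → E, (∀ i ∈ s, ∀ y, A y (v i) = c i y • v i) → Set.InjOn c s →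
      ∑ i ∈ s, v i = 0 → ∀ i ∈ s, v i = 0 := by
  classical
  induction s using Finset.induction_on with
  | empty => intro v _ _ _ i hi; simp at hi
  | insert a s ha ih =>
    intro v hA hc hs
    have key : ∀ i ∈ s, v i = 0 := by
      intro i hi
      have hne : c i ≠ c a := by
        intro h
        have := hc (by simp [hi]) (by simp) h
        exact ha (this ▸ hi)
      obtain ⟨y, hy⟩ := Function.ne_iff.mp hne
      have h1 := ih (fun i => (c i y - c a y) • v i) (by
          intro j hj z
          rw [map_smul, hA j (by simp [hj]), smul_comm])
        (hc.mono (by simp)) (by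
          have h2 := congrArg (fun w => A y w - c a y • w) hs
          simp only [map_zero, smul_zero, sub_zero, map_sum, Finset.smul_sum] at h2
          rw [← Finset.sum_sub_distrib, Finset.sum_insert ha, hA a (by simp), sub_self,
            zero_add] at h2
          rw [← h2]
          apply Finset.sum_congr rfl
          intro j hj
          rw [hA j (by simp [hj]), sub_smul]) i hi
      rcases smul_eq_zero.mp h1 with h1 | h1
      · exact absurd (sub_eq_zero.mp h1) hy
      · exact h1
    intro i hi
    rcases Finset.mem_insert.mp hi with rfl | hi
    · rw [Finset.sum_insert ha, Finset.sum_eq_zero key, add_zero] at hs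
      exact hs
    · exact key i hi

open Representation

variable {G : Type} [Group G] {V : Type} [AddCommGroup V] [Module ℂ V]

/-- The twist of a representation by a linear character. -/
noncomputable def tw (ρ : Representation ℂ G V) (μ : G →* ℂˣ) : Representation ℂ G V where
  toFun g := (μ g : ℂ) • ρ g
  map_one' := by simp
  map_mul' g h := by
    rw [map_mul, map_mul, smul_mul_smul_comm]; simp

theorem tw_apply (ρ : Representation ℂ G V) (μ : G →* ℂˣ) (g : G) (v : V) :
    tw ρ μ g v = (μ g : ℂ) • ρ g v := rfl

theorem tw_char (ρ : Representation ℂ G V) (μ : G →* ℂˣ) (g : G) :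
    (tw ρ μ).character g = (μ g : ℂ) * ρ.character g := by
  simp [Representation.character, tw]

theorem IrrRep.tw {ρ : Representation ℂ G V} (h : IrrRep ρ) (μ : G →* ℂˣ) : IrrRep (tw ρ μ) := by
  refine ⟨h.1, fun W hW => h.2 W fun g v hv => ?_⟩
  have h1 := W.smul_mem ((μ g : ℂ)⁻¹) (hW g v hv)
  rwa [tw_apply, smul_smul, inv_mul_cancel₀ (by simp), one_smul] at h1

theorem equiv_of_char_eq [Finite G] {W : Type} [AddCommGroup W] [Module ℂ W]
    [FiniteDimensional ℂ V] [FiniteDimensional ℂ W]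
    {ρ : Representation ℂ G V} {σ : Representation ℂ G W} (hρ : IrrRep ρ) (hσ : IrrRep σ)
    (h : ρ.character = σ.character) : Nonempty (Representation.Equiv ρ σ) := by
  classical
  have := hρ.isIrreducible
  have := hσ.isIrreducible
  have : Fintype G := Fintype.ofFinite G
  have : Invertible (Nat.card G : ℂ) := invertibleOfNonzero (by exact_mod_cast Nat.card_pos.ne')
  by_contra hne
  have h1 := Representation.char_orthonormal σ ρ
  have h2 := Representation.char_orthonormal ρ ρ
  rw [if_neg hne, ← h, h2, if_pos ⟨Representation.Equiv.refl ρ⟩] at h1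
  exact one_ne_zero h1

theorem IrrRep.ker_zero {ρ : Representation ℂ G V} (h : IrrRep ρ) (l : V →ₗ[ℂ] ℂ) (hl : l ≠ 0)
    (w : V) (hw : ∀ g, l (ρ g w) = 0) : w = 0 := by
  let K : Submodule ℂ V :=
    { carrier := {w | ∀ g, l (ρ g w) = 0}
      zero_mem' := by intro g; simp
      add_mem' := by intro a b ha hb g; simp [ha g, hb g]
      smul_mem' := by intro c a ha g; simp [ha g] }
  rcases h.2 K (by
    intro g v hv g'
    have := hv (g' * g)
    rwa [map_mul] at this) with hK | hK
  · have : w ∈ K := hw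
    rw [hK] at this
    simpa using this
  · exfalso
    apply hl
    ext v
    have : v ∈ K := by rw [hK]; trivial
    simpa using this 1

theorem card_stab_le [Finite G] [FiniteDimensional ℂ V] {ρ : Representation ℂ G V}
    (hρ : IrrRep ρ) (X T P0 : Subgroup G) (f : G → ℂˣ) (hTX : T ≤ X) (hPT : P0 ≤ T)
    (hPc : P0 ≤ commutator G)
    (hXt : X ⊔ commutator G = ⊤) (hXn : ∀ x ∈ X, ∀ y ∈ P0, x * y * x⁻¹ ∈ P0)
    (hTm : ∀ x ∈ X, (∀ y ∈ P0, f (x * y * x⁻¹) = f y) → x ∈ T)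
    (l : V →ₗ[ℂ] ℂ) (hl : l ≠ 0) (hlT : ∀ t ∈ T, ∀ v, l (ρ t v) = (f t : ℂ) * l v)
    (Λ : Finset (G →* ℂˣ)) (hΛ : ∀ μ ∈ Λ, ∀ g, (μ g : ℂ) * ρ.character g = ρ.character g) :
    Λ.card ≤ Module.finrank ℂ V := by
  classical
  have : Fintype (G ⧸ T) := Fintype.ofFinite _
  have hμc : ∀ (μ : G →* ℂˣ), ∀ n ∈ commutator G, μ n = 1 := fun μ n hn =>
    MonoidHom.mem_ker.mp (Abelianization.commutator_subset_ker μ hn)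
  -- the operators
  have hΦ : ∀ μ : Λ, ∃ Φ : V →ₗ[ℂ] V, Φ ≠ 0 ∧ ∀ g v, Φ (ρ g v) = (μ.1 g : ℂ) • ρ g (Φ v) := by
    rintro ⟨μ, hμ⟩
    obtain ⟨e⟩ := equiv_of_char_eq hρ (hρ.tw μ) (by
      funext g; rw [tw_char, hΛ μ hμ])
    refine ⟨e.toLinearEquiv, ?_, ?_⟩
    · intro h0
      have := hρ.1
      obtain ⟨v, hv⟩ := exists_ne (0 : V)
      apply hv
      apply e.toLinearEquiv.injective
      have := LinearMap.congr_fun h0 v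
      simpa using this
    · intro g v
      exact Representation.IntertwiningMap.isIntertwining _ _ e.toIntertwiningMap g v
  choose Φ hΦ0 hΦg using hΦ
  -- injectivity
  have hinj : ∀ Ψ : V →ₗ[ℂ] V, (∀ n ∈ commutator G, ∀ v, Ψ (ρ n v) = ρ n (Ψ v)) →
      (∑ q ∈ Finset.univ.filter (fun q : G ⧸ T => q.out ∈ X), l ∘ₗ ρ (q.out⁻¹) ∘ₗ Ψ) = 0 →
      Ψ = 0 := by
    intro Ψ hΨ hsum
    have h1 := eig_zero (fun y : P0 => (ρ (y : G)).lcomp ℂ ℂ)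
      (fun (q : G ⧸ T) (y : P0) => (f (q.out⁻¹ * y * q.out⁻¹⁻¹) : ℂ))
      (Finset.univ.filter (fun q : G ⧸ T => q.out ∈ X))
      (fun q => l ∘ₗ ρ (q.out⁻¹) ∘ₗ Ψ) (by
        intro q hq y
        have hqX : q.out ∈ X := (Finset.mem_filter.mp hq).2
        ext v
        simp only [LinearMap.lcomp_apply, LinearMap.comp_apply, LinearMap.smul_apply, smul_eq_mul]
        rw [hΨ y (hPc y.2), ← hlT _ (hPT (hXn _ (X.inv_mem hqX) y y.2))]
        have e : ∀ a b : G, ∀ w, ρ a (ρ b w) = ρ (a * b) w := fun a b w => by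
          rw [map_mul, Module.End.mul_apply]
        rw [e, e]
        congr 3
        group) (by
        intro q hq q' hq' h
        have hqX : q.out ∈ X := (Finset.mem_filter.mp hq).2
        have hqX' : q'.out ∈ X := (Finset.mem_filter.mp hq').2
        have h2 : q.out⁻¹ * q'.out ∈ T := by
          apply hTm _ (X.mul_mem (X.inv_mem hqX) hqX')
          intro y hy
          have h3 := congrFun h ⟨_, hXn _ hqX' y hy⟩
          simp only [Units.val_inj] at h3
          have e1 : q.out⁻¹ * (q'.out * y * q'.out⁻¹) * q.out⁻¹⁻¹ =
            q.out⁻¹ * q'.out * y * (q.out⁻¹ * q'.out)⁻¹ := by group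
          have e2 : q'.out⁻¹ * (q'.out * y * q'.out⁻¹) * q'.out⁻¹⁻¹ = y := by group
          rw [e1, e2] at h3
          exact h3
        rw [← QuotientGroup.out_eq' q, ← QuotientGroup.out_eq' q']
        exact QuotientGroup.eq.mpr h2) hsum
    have h2 : ∀ x ∈ X, ∀ v, l (ρ x (Ψ v)) = 0 := by
      intro x hx v
      have ht : ((x⁻¹ : G) : G ⧸ T).out⁻¹ * x⁻¹ ∈ T := by
        rw [← QuotientGroup.eq]
        exact Quotient.out_eq' _
      set q := ((x⁻¹ : G) : G ⧸ T) with hq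
      have hqX : q.out ∈ X := by
        have := X.mul_mem (X.inv_mem hx) (X.inv_mem (hTX ht))
        have e : x⁻¹ * (q.out⁻¹ * x⁻¹)⁻¹ = q.out := by group
        rwa [e] at this
      have h3 := LinearMap.congr_fun (h1 q (by simp [hqX])) v
      simp only [LinearMap.comp_apply, LinearMap.zero_apply] at h3
      have e : x = (q.out⁻¹ * x⁻¹)⁻¹ * q.out⁻¹ := by group
      rw [e, map_mul, Module.End.mul_apply, hlT _ (T.inv_mem ht), h3, mul_zero]
    ext v
    apply hρ.ker_zero l hl
    intro g
    have hg : g ∈ X ⊔ commutator G := by rw [hXt]; trivial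
    obtain ⟨x, hx, n, hn, rfl⟩ := Subgroup.mem_sup_of_normal_right.mp hg
    rw [map_mul, Module.End.mul_apply, ← hΨ n hn]
    exact h2 x hx _
  -- linear independence
  let S : (V →ₗ[ℂ] V) → Module.Dual ℂ V := fun Ψ =>
    ∑ q ∈ Finset.univ.filter (fun q : G ⧸ T => q.out ∈ X), l ∘ₗ ρ (q.out⁻¹) ∘ₗ Ψ
  have hS : ∀ c : Λ → ℂ, S (∑ μ, c μ • Φ μ) = ∑ μ, c μ • S (Φ μ) := by
    intro c
    simp only [S, Finset.smul_sum]
    rw [Finset.sum_comm]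
    apply Finset.sum_congr rfl
    intro q _
    ext v
    simp [LinearMap.sum_apply]
  have hli : LinearIndependent ℂ (fun μ : Λ => S (Φ μ)) := by
    rw [Fintype.linearIndependent_iff]
    intro c hc
    rw [← hS] at hc
    have h0 := hinj _ (by
      intro n hn v
      simp only [LinearMap.sum_apply, LinearMap.smul_apply, map_sum, map_smul]
      apply Finset.sum_congr rfl
      intro μ _
      rw [hΦg, hμc μ.1 n hn]
      simp) hc
    have h1 := eig_zero
      (fun g : G => (LinearMap.mulLeft ℂ (ρ g⁻¹)) ∘ₗ (LinearMap.mulRight ℂ (ρ g)))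
      (fun (μ : Λ) g => (μ.1 g : ℂ)) Finset.univ (fun μ => c μ • Φ μ) (by
        intro μ _ g
        ext v
        simp only [LinearMap.comp_apply, LinearMap.mulLeft_apply, LinearMap.mulRight_apply,
          Module.End.mul_apply, LinearMap.smul_apply, hΦg, map_smul]
        rw [← Module.End.mul_apply (ρ g⁻¹), ← map_mul, inv_mul_cancel, map_one,
          Module.End.one_apply, smul_comm]) (by
        intro μ _ μ' _ h
        ext g
        exact congrFun h g) h0
    intro μ
    exact (smul_eq_zero.mp (h1 μ (Finset.mem_univ μ))).resolve_right (hΦ0 μ)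
  have := hli.fintype_card_le_finrank
  rwa [Fintype.card_coe, Subspace.dual_finrank_eq] at this

end Bound

section FrobSchur

open Representation

variable {G : Type} [Group G] {V : Type} [AddCommGroup V] [Module ℂ V]

theorem bilin_unique [FiniteDimensional ℂ V] {ρ : Representation ℂ G V} (hρ : IrrRep ρ)
    (B B' : V →ₗ[ℂ] V →ₗ[ℂ] ℂ) (hB : ∀ g u v, B (ρ g u) (ρ g v) = B u v)
    (hB' : ∀ g u v, B' (ρ g u) (ρ g v) = B' u v) (hB0 : B ≠ 0) : ∃ c : ℂ, B' = c • B := by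
  have hinv : ∀ (C : V →ₗ[ℂ] V →ₗ[ℂ] ℂ), (∀ g u v, C (ρ g u) (ρ g v) = C u v) →
      ∀ g v, C v = 0 → C (ρ g v) = 0 := by
    intro C hC g v hv
    ext w
    have e : ρ g (ρ g⁻¹ w) = w := by simp
    rw [← e, hC, hv]
    simp
  have := hρ.1
  have hker : LinearMap.ker B = ⊥ := by
    rcases hρ.2 (LinearMap.ker B) (fun g v hv => hinv B hB g v hv) with h | h
    · exact h
    · exact absurd (LinearMap.ker_eq_top.mp h) hB0
  have hbij : Function.Bijective B := by
    have h1 : Function.Injective B := LinearMap.ker_eq_bot.mp hker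
    refine ⟨h1, ?_⟩
    exact (LinearMap.injective_iff_surjective_of_finrank_eq_finrank
      (Subspace.dual_finrank_eq (K := ℂ) (V := V)).symm).mp h1
  let e : V ≃ₗ[ℂ] (V →ₗ[ℂ] ℂ) := LinearEquiv.ofBijective B hbij
  obtain ⟨c, hc⟩ := Module.End.exists_eigenvalue (e.symm.toLinearMap ∘ₗ B')
  obtain ⟨v, hv, hv0⟩ := hc.exists_hasEigenvector
  rw [Module.End.mem_eigenspace_iff] at hv
  have hv1 : B' v = c • B v := by
    have := congrArg e hv
    rw [map_smul] at this
    simpa [e] using this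
  refine ⟨c, ?_⟩
  rcases hρ.2 (LinearMap.ker (B' - c • B)) (fun g v hv => hinv (B' - c • B) (by
    intro g u v
    simp [hB, hB']) g v hv) with h | h
  · exfalso
    apply hv0
    have : v ∈ LinearMap.ker (B' - c • B) := by
      rw [LinearMap.mem_ker, LinearMap.sub_apply, LinearMap.smul_apply, hv1, sub_self]
    rw [h] at this
    simpa using this
  · exact sub_eq_zero.mp (LinearMap.ker_eq_top.mp h)

theorem finrank_eq_one_of_inv {ρ : Representation ℂ G V} (hρ : IrrRep ρ) (v : V) (hv : v ≠ 0)
    (h : ∀ g, ρ g v ∈ Submodule.span ℂ {v}) : Module.finrank ℂ V = 1 := by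
  rcases hρ.2 (Submodule.span ℂ {v}) (by
    intro g w hw
    obtain ⟨c, rfl⟩ := Submodule.mem_span_singleton.mp hw
    rw [map_smul]
    exact Submodule.smul_mem _ _ (h g)) with h1 | h1
  · exact absurd (Submodule.span_singleton_eq_bot.mp h1) hv
  · rw [← finrank_top, ← h1, finrank_span_singleton hv]

theorem char_sum_eq [Fintype G] [FiniteDimensional ℂ V] {ρ : Representation ℂ G V}
    (hρ : IrrRep ρ) : ∑ g, ρ.character g * ρ.character g⁻¹ = (Nat.card G : ℂ) := by
  classical
  have := hρ.isIrreducible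
  have hne : (Nat.card G : ℂ) ≠ 0 := by exact_mod_cast Nat.card_pos.ne'
  have : Invertible (Nat.card G : ℂ) := invertibleOfNonzero hne
  have h2 := Representation.char_orthonormal ρ ρ
  rw [if_pos ⟨Representation.Equiv.refl ρ⟩] at h2
  rwa [inv_mul_eq_one₀ hne, eq_comm] at h2

theorem real_finrank_one [Finite G] (hodd : Odd (Nat.card G)) [FiniteDimensional ℂ V]
    {ρ : Representation ℂ G V} (hρ : IrrRep ρ)
    (hreal : ∀ g, ρ.character g⁻¹ = ρ.character g) : Module.finrank ℂ V = 1 := by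
  classical
  have : Fintype G := Fintype.ofFinite G
  let b := Module.finBasis ℂ V
  have htr : ∀ A : V →ₗ[ℂ] V, LinearMap.trace ℂ V A = ∑ i, b.coord i (A (b i)) := by
    intro A
    rw [LinearMap.trace_eq_matrix_trace ℂ b, Matrix.trace]
    simp [LinearMap.toMatrix_apply]
  let F : Fin (Module.finrank ℂ V) → Fin (Module.finrank ℂ V) → V →ₗ[ℂ] V →ₗ[ℂ] ℂ :=
    fun i k => ∑ g, (b.coord i ∘ₗ ρ g).smulRight (b.coord k ∘ₗ ρ g)
  have hF : ∀ i k u v, F i k u v = ∑ g, b.coord i (ρ g u) * b.coord k (ρ g v) := by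
    intro i k u v
    simp [F, LinearMap.sum_apply]
  have hFi : ∀ i k g u v, F i k (ρ g u) (ρ g v) = F i k u v := by
    intro i k g u v
    rw [hF, hF, ← Equiv.sum_comp (Equiv.mulRight g)
      (fun x => b.coord i (ρ x u) * b.coord k (ρ x v))]
    simp [map_mul]
  have h1 : ∑ i, ∑ k, F i k (b i) (b k) = (Nat.card G : ℂ) := by
    rw [← char_sum_eq hρ]
    simp only [hF]
    have : ∀ i, ∑ k, ∑ g, b.coord i (ρ g (b i)) * b.coord k (ρ g (b k)) =
        ∑ g, ∑ k, b.coord i (ρ g (b i)) * b.coord k (ρ g (b k)) := fun i => Finset.sum_comm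
    simp only [this]
    rw [Finset.sum_comm]
    apply Finset.sum_congr rfl
    intro g _
    rw [hreal]
    simp only [Representation.character]
    rw [htr, Finset.sum_mul_sum]
  have h2 : ∑ i, ∑ k, F i k (b k) (b i) = ∑ g, ρ.character (g ^ 2) := by
    simp only [hF]
    have : ∀ i, ∑ k, ∑ g, b.coord i (ρ g (b k)) * b.coord k (ρ g (b i)) =
        ∑ g, ∑ k, b.coord i (ρ g (b k)) * b.coord k (ρ g (b i)) := fun i => Finset.sum_comm
    simp only [this]
    rw [Finset.sum_comm]
    apply Finset.sum_congr rfl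
    intro g _
    simp only [Representation.character]
    rw [htr]
    apply Finset.sum_congr rfl
    intro i _
    rw [pow_two, map_mul, Module.End.mul_apply]
    conv_rhs => rw [← b.sum_repr (ρ g (b i)), map_sum, map_sum]
    apply Finset.sum_congr rfl
    intro k _
    rw [map_smul, map_smul, smul_eq_mul, mul_comm]
    rfl
  have hGne : (Nat.card G : ℂ) ≠ 0 := by exact_mod_cast Nat.card_pos.ne'
  obtain ⟨i0, k0, hik⟩ : ∃ i k, F i k ≠ 0 := by
    by_contra! hcon
    apply hGne
    rw [← h1]
    simp [hcon]
  obtain ⟨ε, hε⟩ := bilin_unique hρ (F i0 k0) (F i0 k0).flip (hFi i0 k0)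
    (fun g u v => hFi i0 k0 g v u) hik
  have hε0 : ε ≠ 0 := by
    rintro rfl
    apply hik
    rw [zero_smul] at hε
    ext u v
    exact LinearMap.congr_fun (LinearMap.congr_fun hε v) u
  have hεs : ∀ u v, F i0 k0 v u = ε * F i0 k0 u v := by
    intro u v
    exact LinearMap.congr_fun (LinearMap.congr_fun hε u) v
  have h3 : ∑ g, ρ.character (g ^ 2) = ε * (Nat.card G : ℂ) := by
    rw [← h1, ← h2, Finset.mul_sum]
    apply Finset.sum_congr rfl
    intro i _
    rw [Finset.mul_sum]
    apply Finset.sum_congr rfl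
    intro k _
    obtain ⟨c, hc⟩ := bilin_unique hρ (F i0 k0) (F i k) (hFi i0 k0) (hFi i k) hik
    rw [hc]
    simp only [LinearMap.smul_apply, smul_eq_mul]
    rw [hεs (b i) (b k)]
    ring
  have hcop : (Nat.card G).Coprime 2 := Nat.coprime_two_right.mpr hodd
  have h4 : ∑ g, ρ.character (g ^ 2) = ∑ g, ρ.character g :=
    Equiv.sum_comp (powCoprime hcop) (fun g => ρ.character g)
  have : Invertible (Nat.card G : ℂ) := invertibleOfNonzero hGne
  have h5 := ρ.card_inv_mul_sum_char_eq_finrank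
  rw [← h4, h3] at h5
  have h6 : Module.finrank ℂ (invariants ρ) ≠ 0 := by
    intro h0
    rw [h0] at h5
    have h7 : ((Nat.card G : ℂ))⁻¹ * (ε * (Nat.card G : ℂ)) ≠ 0 :=
      mul_ne_zero (inv_ne_zero hGne) (mul_ne_zero hε0 hGne)
    apply h7
    simpa using h5
  have h7 : invariants ρ ≠ ⊥ := by
    intro h0
    rw [h0, finrank_bot] at h6
    exact h6 rfl
  obtain ⟨v, hv, hv0⟩ := Submodule.exists_mem_ne_zero_of_ne_bot h7
  exact finrank_eq_one_of_inv hρ v hv0 (fun g => by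
    rw [(mem_invariants ρ v).mp hv g]; exact Submodule.mem_span_singleton_self v)

theorem twreal_finrank_one [Finite G] (hodd : Odd (Nat.card G)) [FiniteDimensional ℂ V]
    {ρ : Representation ℂ G V} (hρ : IrrRep ρ) (lam : G →* ℂˣ)
    (hreal : ∀ g, ρ.character g⁻¹ = (lam g : ℂ) * ρ.character g) : Module.finrank ℂ V = 1 := by
  obtain ⟨m, hm⟩ := hodd
  have hsq : ∀ g, lam g = (lam ^ (m + 1)) g * (lam ^ (m + 1)) g := by
    intro g
    rw [MonoidHom.pow_apply, ← pow_add]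
    have e : m + 1 + (m + 1) = Nat.card G + 1 := by omega
    have h1 : lam g ^ Nat.card G = 1 := by
      rw [← map_pow, pow_card_eq_one', map_one]
    rw [e, pow_succ, h1, one_mul]
  apply real_finrank_one ⟨m, hm⟩ (hρ.tw (lam ^ (m + 1)))
  intro g
  rw [tw_char, tw_char, hreal, hsq g, ← mul_assoc]
  congr 1
  rw [map_inv]
  push_cast
  rw [inv_mul_cancel_left₀ (by simp)]

theorem finrank_ne_two [Finite G] (hodd : Odd (Nat.card G)) [FiniteDimensional ℂ V]
    {ρ : Representation ℂ G V} (hρ : IrrRep ρ) : Module.finrank ℂ V ≠ 2 := by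
  classical
  intro h2
  let d : G →* ℂˣ := (LinearMap.det.comp ρ : G →* ℂ).toHomUnits
  have hd : ∀ g, (d g : ℂ) = LinearMap.det (ρ g) := fun g => rfl
  have h1 := twreal_finrank_one hodd hρ d⁻¹ (by
    intro g
    let b := Module.finBasisOfFinrankEq ℂ V h2
    have hne : (d g : ℂ) ≠ 0 := by simp
    rw [MonoidHom.inv_apply]
    push_cast
    rw [eq_inv_mul_iff_mul_eq₀ hne, hd]
    simp only [Representation.character]
    rw [LinearMap.trace_eq_matrix_trace ℂ b, LinearMap.trace_eq_matrix_trace ℂ b,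
      ← LinearMap.det_toMatrix b]
    have hMN : LinearMap.toMatrix b b (ρ g) * LinearMap.toMatrix b b (ρ g⁻¹) = 1 := by
      rw [← LinearMap.toMatrix_mul, ← map_mul, mul_inv_cancel, map_one, LinearMap.toMatrix_one]
    have h3 : (LinearMap.toMatrix b b (ρ g)).det • LinearMap.toMatrix b b (ρ g⁻¹)
        = (LinearMap.toMatrix b b (ρ g)).adjugate := by
      rw [← mul_one (Matrix.adjugate _), ← hMN, ← mul_assoc, Matrix.adjugate_mul, Matrix.smul_mul,
        one_mul]
    rw [← smul_eq_mul, ← Matrix.trace_smul, h3, Matrix.adjugate_fin_two, Matrix.trace_fin_two,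
      Matrix.trace_fin_two]
    simp [add_comm])
  omega

end FrobSchur

section Counting

open Representation CategoryTheory

variable {G : Type} [Group G]

theorem mem_Irr_of_norm [Fintype G] {V : Type} [AddCommGroup V] [Module ℂ V]
    [FiniteDimensional ℂ V] (ρ : Representation ℂ G V)
    (h : ∑ g, ρ.character g * ρ.character g⁻¹ = (Nat.card G : ℂ)) : ρ.character ∈ Irr G :=
  ⟨FDRep.of ρ, (FDRep.simple_iff_char_is_norm_one (FDRep.of ρ)).mpr h, rfl⟩

theorem Irr_norm [Fintype G] {f : G → ℂ} (hf : f ∈ Irr G) :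
    ∑ g, f g * f g⁻¹ = (Nat.card G : ℂ) := by
  obtain ⟨V, hV, rfl⟩ := hf
  exact (FDRep.simple_iff_char_is_norm_one V).mp hV

theorem Irr_orth [Fintype G] {f f' : G → ℂ} (hf : f ∈ Irr G) (hf' : f' ∈ Irr G) (hne : f ≠ f') :
    ∑ g, f g * f' g⁻¹ = 0 := by
  classical
  obtain ⟨V, hV, rfl⟩ := hf
  obtain ⟨W, hW, rfl⟩ := hf'
  have hGne : (Nat.card G : ℂ) ≠ 0 := by exact_mod_cast Nat.card_pos.ne'
  have : Invertible (Nat.card G : ℂ) := invertibleOfNonzero hGne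
  have h1 := FDRep.char_orthonormal V W
  rw [if_neg (by
    rintro ⟨i⟩
    exact hne (FDRep.char_iso i))] at h1
  rcases mul_eq_zero.mp h1 with h2 | h2
  · exact absurd h2 (inv_ne_zero hGne)
  · exact h2

theorem Irr_finite [Finite G] : (Irr G).Finite := by
  classical
  have : Fintype G := Fintype.ofFinite G
  have hli : LinearIndependent ℂ (fun f : Irr G => f.1) := by
    rw [linearIndependent_iff']
    intro s c hs j hj
    have h1 : ∑ g, (∑ i ∈ s, c i • i.1) g * j.1 g⁻¹ = 0 := by
      rw [hs]; simp
    simp only [Finset.sum_apply, Pi.smul_apply, smul_eq_mul, Finset.sum_mul] at h1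
    rw [Finset.sum_comm, Finset.sum_eq_single j] at h1
    · simp only [mul_assoc] at h1
      rw [← Finset.mul_sum, Irr_norm j.2] at h1
      have hGne : (Nat.card G : ℂ) ≠ 0 := by exact_mod_cast Nat.card_pos.ne'
      exact (mul_eq_zero.mp h1).resolve_right hGne
    · intro i _ hij
      simp only [mul_assoc]
      rw [← Finset.mul_sum, Irr_orth i.2 j.2 (fun h => hij (Subtype.ext h)), mul_zero]
    · intro h; exact absurd hj h
  have : Finite (Irr G) := hli.finite
  exact Set.toFinite _

/-- A linear character as a complex function. -/
def linFun (μ : G →* ℂˣ) : G → ℂ := fun g => (μ g : ℂ)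

theorem linFun_injective : Function.Injective (linFun : (G →* ℂˣ) → G → ℂ) := by
  intro μ μ' h
  ext g
  exact congrFun h g

theorem linFun_mem [Finite G] (μ : G →* ℂˣ) : linFun μ ∈ Irr G := by
  have : Fintype G := Fintype.ofFinite G
  have h : (tw (Representation.trivial ℂ G ℂ) μ).character = linFun μ := by
    funext g
    rw [tw_char]
    have : (Representation.trivial ℂ G ℂ).character g = 1 := by
      have h1 : Representation.trivial ℂ G ℂ g = 1 := rfl
      simp only [Representation.character]
      rw [h1, LinearMap.trace_one]; simp
    rw [this, mul_one]
    rfl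
  rw [← h]
  apply mem_Irr_of_norm
  rw [h]
  simp [linFun]

theorem finite_lin [Finite G] : Finite (G →* ℂˣ) := by
  have := (Irr_finite (G := G)).to_subtype
  exact Finite.of_injective (fun μ => (⟨linFun μ, linFun_mem μ⟩ : Irr G))
    (fun a b h => linFun_injective (congrArg Subtype.val h))

theorem scalar_of_one {V : Type} [AddCommGroup V] [Module ℂ V]
    (h : Module.finrank ℂ V = 1) (A : V →ₗ[ℂ] V) : A = LinearMap.det A • LinearMap.id := by
  obtain ⟨v, hv, hall⟩ := finrank_eq_one_iff'.mp h
  obtain ⟨c, hc⟩ := hall (A v)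
  have h1 : A = c • LinearMap.id := by
    ext w
    obtain ⟨e, rfl⟩ := hall w
    simp only [map_smul, LinearMap.smul_apply, LinearMap.id_apply]
    rw [← hc, smul_comm]
  have h2 : LinearMap.det A = c := by
    rw [h1, LinearMap.det_smul, h]; simp
  rw [h2]; exact h1

theorem deg_cases [Finite G] {f : G → ℂ} (hf : f ∈ Irr G) (h7 : ¬ 7 ∣ charDeg f) :
    (∃ μ : G →* ℂˣ, f = linFun μ) ∨ 2 ≤ (f 1).re := by
  obtain ⟨V, hV, rfl⟩ := hf
  have h1 : V.character 1 = (Module.finrank ℂ V : ℂ) := FDRep.char_one V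
  have h2 : charDeg V.character = Module.finrank ℂ V := by
    simp [charDeg, h1]
  rw [h2] at h7
  have h3 : Module.finrank ℂ V ≠ 0 := by
    intro h; rw [h] at h7; simp at h7
  by_cases h4 : Module.finrank ℂ V = 1
  · left
    let d : G →* ℂˣ := (LinearMap.det.comp V.ρ : G →* ℂ).toHomUnits
    refine ⟨d, ?_⟩
    funext g
    change LinearMap.trace ℂ V (V.ρ g) = LinearMap.det (V.ρ g)
    conv_lhs => rw [scalar_of_one h4 (V.ρ g)]
    rw [map_smul, LinearMap.trace_id, h4]
    simp
  · right
    rw [h1]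
    have : 2 ≤ Module.finrank ℂ V := by omega
    simpa using this

theorem acd_ge [Finite G] (hodd : Odd (Nat.card G)) {V : Type} [AddCommGroup V] [Module ℂ V]
    [FiniteDimensional ℂ V] {ρ : Representation ℂ G V} (hρ : IrrRep ρ)
    (h7 : ¬ 7 ∣ Module.finrank ℂ V) (h1 : Module.finrank ℂ V ≠ 1)
    (hΛ : ∀ Λ : Finset (G →* ℂˣ),
      (∀ μ ∈ Λ, ∀ g, (μ g : ℂ) * ρ.character g = ρ.character g) →
      Λ.card ≤ Module.finrank ℂ V) :
    9 / 5 ≤ acd {f ∈ Irr G | ¬ 7 ∣ charDeg f} := by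
  classical
  have : Fintype G := Fintype.ofFinite G
  have := finite_lin (G := G)
  have : Fintype (G →* ℂˣ) := Fintype.ofFinite _
  set S : Set (G → ℂ) := {f ∈ Irr G | ¬ 7 ∣ charDeg f} with hSdef
  have hS : S.Finite := Irr_finite.subset (fun f hf => hf.1)
  have hd3 : 3 ≤ Module.finrank ℂ V := by
    have := finrank_ne_two hodd hρ
    have : Module.finrank ℂ V ≠ 0 := by
      intro h; rw [h] at h7; simp at h7
    omega
  set d := Module.finrank ℂ V with hd
  -- the linear characters
  let A : Finset (G → ℂ) := Finset.univ.image (linFun : (G →* ℂˣ) → G → ℂ)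
  have hAcard : A.card = Fintype.card (G →* ℂˣ) :=
    Finset.card_image_of_injective _ linFun_injective
  have hA1 : ∀ f ∈ A, (f 1).re = 1 := by
    intro f hf
    obtain ⟨μ, _, rfl⟩ := Finset.mem_image.mp hf
    simp [linFun]
  have hAS : ∀ f ∈ A, f ∈ S := by
    intro f hf
    have h2 : charDeg f = 1 := by rw [charDeg, hA1 f hf]; simp
    obtain ⟨μ, _, rfl⟩ := Finset.mem_image.mp hf
    refine ⟨linFun_mem μ, ?_⟩
    rw [h2]; norm_num
  -- first orbit
  let twf : (G →* ℂˣ) → G → ℂ := fun μ g => (μ g : ℂ) * ρ.character g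
  let O1 : Finset (G → ℂ) := Finset.univ.image twf
  let bar : (G → ℂ) → G → ℂ := fun f g => f g⁻¹
  have hbar : Function.Injective bar := by
    intro f f' h
    funext g
    have := congrFun h g⁻¹
    simpa [bar] using this
  let O2 : Finset (G → ℂ) := O1.image bar
  have hO2card : O2.card = O1.card := Finset.card_image_of_injective _ hbar
  have hcount : Fintype.card (G →* ℂˣ) ≤ d * O1.card := by
    have := Finset.card_le_mul_card_image (f := twf) Finset.univ d (by
      intro f hf
      obtain ⟨μ0, _, rfl⟩ := Finset.mem_image.mp hf
      rw [← Finset.card_image_of_injective _ (mul_right_injective μ0⁻¹)]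
      apply hΛ
      intro μ hμ g
      obtain ⟨μ1, hμ1, rfl⟩ := Finset.mem_image.mp hμ
      have h2 : (μ1 g : ℂ) * ρ.character g = (μ0 g : ℂ) * ρ.character g :=
        congrFun (Finset.mem_filter.mp hμ1).2 g
      rw [MonoidHom.mul_apply, MonoidHom.inv_apply]
      push_cast
      rw [mul_assoc, h2, inv_mul_cancel_left₀ (by simp)])
    exact this
  have htw : ∀ μ, twf μ = (tw ρ μ).character := by
    intro μ; funext g; rw [tw_char]
  have hO1deg : ∀ f ∈ O1, f 1 = (d : ℂ) := by
    intro f hf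
    obtain ⟨μ, _, rfl⟩ := Finset.mem_image.mp hf
    simp [twf, Representation.char_one, hd]
  have hO2deg : ∀ f ∈ O2, f 1 = (d : ℂ) := by
    intro f hf
    obtain ⟨f', hf', rfl⟩ := Finset.mem_image.mp hf
    simpa [bar] using hO1deg f' hf'
  have hdegS : ∀ f : G → ℂ, f 1 = (d : ℂ) → ¬ 7 ∣ charDeg f := by
    intro f hf
    have : charDeg f = d := by simp [charDeg, hf]
    rwa [this]
  have hO1S : ∀ f ∈ O1, f ∈ S := by
    intro f hf
    refine ⟨?_, hdegS f (hO1deg f hf)⟩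
    obtain ⟨μ, _, rfl⟩ := Finset.mem_image.mp hf
    rw [htw]
    exact mem_Irr_of_norm _ (char_sum_eq (hρ.tw μ))
  have hO2S : ∀ f ∈ O2, f ∈ S := by
    intro f hf
    refine ⟨?_, hdegS f (hO2deg f hf)⟩
    obtain ⟨f', hf', rfl⟩ := Finset.mem_image.mp hf
    obtain ⟨μ, _, rfl⟩ := Finset.mem_image.mp hf'
    have e : bar (twf μ) = (tw ρ μ).dual.character := by
      funext g
      rw [Representation.char_dual, htw]
    rw [e]
    apply mem_Irr_of_norm
    simp only [Representation.char_dual]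
    rw [← char_sum_eq (hρ.tw μ)]
    apply Finset.sum_congr rfl
    intro g _
    rw [inv_inv, mul_comm]
  have hdisA1 : Disjoint A O1 := by
    rw [Finset.disjoint_left]
    intro f hf hf'
    have h2 := hA1 f hf
    rw [hO1deg f hf'] at h2
    have h3 : d = 1 := by exact_mod_cast h2
    exact h1 h3
  have hdisA2 : Disjoint A O2 := by
    rw [Finset.disjoint_left]
    intro f hf hf'
    have h2 := hA1 f hf
    rw [hO2deg f hf'] at h2
    have h3 : d = 1 := by exact_mod_cast h2
    exact h1 h3
  have hdis12 : Disjoint O1 O2 := by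
    rw [Finset.disjoint_left]
    intro f hf hf'
    obtain ⟨f', hf1, hf2⟩ := Finset.mem_image.mp hf'
    obtain ⟨μ, _, rfl⟩ := Finset.mem_image.mp hf1
    obtain ⟨lam, _, rfl⟩ := Finset.mem_image.mp hf
    apply h1
    apply twreal_finrank_one hodd hρ (μ * lam)
    intro g
    have h2 : (μ g⁻¹ : ℂ) * ρ.character g⁻¹ = (lam g : ℂ) * ρ.character g := congrFun hf2 g
    rw [map_inv] at h2
    push_cast at h2
    rw [inv_mul_eq_iff_eq_mul₀ (by simp)] at h2
    rw [h2, MonoidHom.mul_apply]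
    push_cast
    ring
  -- the sum
  have hsub : (A ∪ O1) ∪ O2 ⊆ hS.toFinset := by
    intro f hf
    rw [Set.Finite.mem_toFinset]
    rcases Finset.mem_union.mp hf with hf | hf
    · rcases Finset.mem_union.mp hf with hf | hf
      · exact hAS f hf
      · exact hO1S f hf
    · exact hO2S f hf
  have hle : ∑ f ∈ (A ∪ O1) ∪ O2, ((f 1).re - 9 / 5) ≤ ∑ f ∈ hS.toFinset, ((f 1).re - 9 / 5) := by
    apply Finset.sum_le_sum_of_subset_of_nonneg hsub
    intro f hf hnot
    have hfS : f ∈ S := (Set.Finite.mem_toFinset hS).mp hf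
    rcases deg_cases hfS.1 hfS.2 with ⟨μ, rfl⟩ | h2
    · exfalso
      apply hnot
      apply Finset.mem_union_left
      apply Finset.mem_union_left
      exact Finset.mem_image_of_mem _ (Finset.mem_univ μ)
    · linarith
  rw [Finset.sum_union (Finset.disjoint_union_left.mpr ⟨hdisA2, hdis12⟩),
    Finset.sum_union hdisA1] at hle
  have sA : ∑ f ∈ A, ((f 1).re - 9 / 5) = (A.card : ℝ) * (1 - 9 / 5) := by
    rw [Finset.sum_congr rfl (fun f hf => by rw [hA1 f hf])]
    simp
    ring
  have s1 : ∑ f ∈ O1, ((f 1).re - 9 / 5) = (O1.card : ℝ) * ((d : ℝ) - 9 / 5) := by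
    rw [Finset.sum_congr rfl (fun f hf => by rw [hO1deg f hf])]
    simp
    ring
  have s2 : ∑ f ∈ O2, ((f 1).re - 9 / 5) = (O2.card : ℝ) * ((d : ℝ) - 9 / 5) := by
    rw [Finset.sum_congr rfl (fun f hf => by rw [hO2deg f hf])]
    simp
    ring
  rw [sA, s1, s2, hAcard, hO2card, Finset.sum_sub_distrib, Finset.sum_const, nsmul_eq_mul] at hle
  have hcR : (Fintype.card (G →* ℂˣ) : ℝ) ≤ (d : ℝ) * (O1.card : ℝ) := by exact_mod_cast hcount
  have hdR : (3 : ℝ) ≤ (d : ℝ) := by exact_mod_cast hd3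
  have hn : (0 : ℝ) ≤ (O1.card : ℝ) := by positivity
  have hpos : (0 : ℝ) < (hS.toFinset.card : ℝ) := by
    have : linFun (1 : G →* ℂˣ) ∈ hS.toFinset :=
      (Set.Finite.mem_toFinset hS).mpr (hAS _ (Finset.mem_image_of_mem _ (Finset.mem_univ 1)))
    exact_mod_cast Finset.card_pos.mpr ⟨_, this⟩
  rw [acd, finsum_mem_eq_finite_toFinset_sum _ hS, Set.ncard_eq_toFinset_card S hS,
    le_div_iff₀ hpos]
  nlinarith [mul_nonneg hn (sub_nonneg.mpr hdR)]

end Counting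

theorem odd_order_avg_sevenprime_lt_implies_sevenNilpotent
    (G : Type) [Group G] [Fintype G] (hodd : Odd (Nat.card G))
    (h : acd {f ∈ Irr G | ¬ 7 ∣ charDeg f} < 9 / 5) : HasNormalPComplement 7 G := by
  have : Fact (Nat.Prime 7) := ⟨by norm_num⟩
  obtain ⟨Q⟩ : Nonempty (Sylow 7 (commutator G)) := inferInstance
  obtain ⟨P, hPQ⟩ := Sylow.exists_comap_subtype_eq Q
  apply tate_thm P
  intro x0 hx0
  by_contra hx0'
  obtain ⟨X, T, P0, τ, f, hfτ, hTX, hPT, hPc, hXt, hXn, hTi, hTm, y, hy, hfy⟩ :=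
    exists_T_data Q P hPQ x0 hx0 hx0'
  obtain ⟨V, _, _, _, ρ, l, hρ, h7, hl, hlT⟩ := exists_constituent 7 T τ hTi
  have hlT' : ∀ t ∈ T, ∀ v, l (ρ t v) = (f t : ℂ) * l v := by
    intro t ht v
    have h1 := hlT ⟨t, ht⟩ v
    rw [← hfτ] at h1
    exact h1
  have h1 : Module.finrank ℂ V ≠ 1 := by
    intro h1
    let d : G →* ℂˣ := (LinearMap.det.comp ρ : G →* ℂ).toHomUnits
    have hd : d y = 1 :=
      MonoidHom.mem_ker.mp (Abelianization.commutator_subset_ker d (hPc hy))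
    have hd' : LinearMap.det (ρ y) = 1 := congrArg Units.val hd
    have hs := scalar_of_one h1 (ρ y)
    rw [hd', one_smul] at hs
    apply hl
    ext v
    have h2 := hlT' y (hPT hy) v
    rw [hs, LinearMap.id_apply] at h2
    by_contra h3
    apply hfy
    ext
    have h4 : (1 : ℂ) * l v = (f y : ℂ) * l v := by rw [one_mul]; exact h2
    exact (mul_right_cancel₀ h3 h4).symm
  have h2 := acd_ge hodd hρ h7 h1 (fun Λ hΛ =>
    card_stab_le hρ X T P0 f hTX hPT hPc hXt hXn hTm l hl hlT' Λ hΛ)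
  linarith
end
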